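/- For every s₁ ≥ 0 there exists C > 0 such that for every τ ∈ (0,1] and all sequences (u_n), (v_n), (w_n) of functions in H^{s₁}(𝕋) indexed by ℤ with only finitely many nonzero terms, ‖(Π_τ(Π_τ u_n · Π_τ v_n · Π_τ w_n))_{n∈ℤ}‖_{X^{s₁,-3/8}_τ} ≤ C ‖(u_n)‖_{X^{s₁,3/8}_τ} ‖(v_n)‖_{X^{s₁,3/8}_τ} ‖(w_n)‖_{X^{s₁,3/8}_τ}, where the products inside are pointwise products of functions on 𝕋. -/

import Mathlib

noncomputable section

open MeasureTheory Complex Filter Topology AddCircle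
open scoped ENNReal

abbrev Torus := AddCircle (2 * Real.pi)

instance : Fact (0 < 2 * Real.pi) := ⟨by positivity⟩

/-- Japanese bracket `⟨x⟩ = (1+|x|²)^{1/2}`. -/
def jbr (x : ℝ) : ℝ := Real.sqrt (1 + x ^ 2)

/-- The Sobolev `H^s` norm on the torus, via Fourier coefficients. -/
def hsNorm (s : ℝ) (f : Torus → ℂ) : ℝ :=
  Real.sqrt (∑' k : ℤ, jbr k ^ (2 * s) * ‖fourierCoeff f k‖ ^ 2)

/-- Membership in `H^s(𝕋)` (as a function): square integrable with finite `H^s` norm. -/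
def InHs (s : ℝ) (f : Torus → ℂ) : Prop :=
  MemLp f 2 haarAddCircle ∧ Summable fun k : ℤ => jbr k ^ (2 * s) * ‖fourierCoeff f k‖ ^ 2

/-- The frequency cutoff `Π_τ`, keeping the Fourier modes `|k| ≤ τ^{-1/2}`. -/
def projC (τ : ℝ) (f : Torus → ℂ) : Torus → ℂ := fun x =>
  ∑' k : ℤ, if |(k : ℝ)| ≤ τ ^ (-(1 : ℝ) / 2) then fourierCoeff f k * fourier k x else 0

/-- The free Schrödinger group `e^{it∂_x²}`, given by the Fourier multiplier `e^{-itk²}`. -/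
def schrod (t : ℝ) (f : Torus → ℂ) : Torus → ℂ := fun x =>
  ∑' k : ℤ, Complex.exp (-Complex.I * t * (k : ℂ) ^ 2) * fourierCoeff f k * fourier k x

/-- Continuity on `I` with values in `L²(𝕋)`. -/
def ContL2On (I : Set ℝ) (u : ℝ → Torus → ℂ) : Prop :=
  (∀ t ∈ I, MemLp (u t) 2 haarAddCircle) ∧
  ∀ t ∈ I, Tendsto (fun t' => eLpNorm (u t' - u t) 2 haarAddCircle) (nhdsWithin t I) (nhds 0)

/-- Continuity on `I` with values in `H^s(𝕋)`. -/
def ContHsOn (s : ℝ) (I : Set ℝ) (u : ℝ → Torus → ℂ) : Prop :=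
  (∀ t ∈ I, InHs s (u t)) ∧
  ∀ t ∈ I, Tendsto (fun t' => hsNorm s (u t' - u t)) (nhdsWithin t I) (nhds 0)

/-- The cubic nonlinearity `|f|² f` (pointwise). -/
def cubic (f : Torus → ℂ) : Torus → ℂ := fun x => (‖f x‖ : ℂ) ^ 2 * f x

/-- The filtered cubic nonlinearity `Π_τ(|Π_τ f|² Π_τ f)`. -/
def projCubic (τ : ℝ) (f : Torus → ℂ) : Torus → ℂ := projC τ (cubic (projC τ f))

/-- `v` is the (global-in-time) mild solution of the projected equation
`i∂_t v = -∂_x² v - μ Π_τ(|Π_τ v|² Π_τ v)`, `v(0) = Π_τ u₀`. -/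
def IsProjSolution (μ τ : ℝ) (u₀ : Torus → ℂ) (v : ℝ → Torus → ℂ) : Prop :=
  ContL2On Set.univ v ∧
  ∀ t : ℝ, ∀ x : Torus,
    v t x = schrod t (projC τ u₀) x
      + Complex.I * μ * ∫ s in (0 : ℝ)..t, schrod (t - s) (projCubic τ (v s)) x

/-- The cubic NLS `i∂_t u = -∂_x² u - μ |u|² u` holds in the sense of space-time
distributions on `(0,T) × 𝕋` (tested against `ψ(t) e^{-ikx}`). -/
def DistribSolOn (μ T : ℝ) (u : ℝ → Torus → ℂ) : Prop :=
  ∀ k : ℤ, ∀ ψ : ℝ → ℂ, ContDiff ℝ (⊤ : ℕ∞) ψ → tsupport ψ ⊆ Set.Ioo 0 T →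
    -Complex.I * ∫ t : ℝ, deriv ψ t * fourierCoeff (u t) k
      = (k : ℂ) ^ 2 * ∫ t : ℝ, ψ t * fourierCoeff (u t) k
        - (μ : ℂ) * ∫ t : ℝ, ψ t * fourierCoeff (cubic (u t)) k

/-- `u ∈ L⁴((0,T) × 𝕋)`. -/
def SpaceTimeL4 (T : ℝ) (u : ℝ → Torus → ℂ) : Prop :=
  MemLp (fun p : ℝ × Torus => u p.1 p.2) 4
    ((volume.restrict (Set.Ioo 0 T)).prod haarAddCircle)

/-- Space-time Fourier transform `ṽ(σ,k)` of `v : ℝ × 𝕋 → ℂ`. -/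
def stFT (v : ℝ → Torus → ℂ) (σ : ℝ) (k : ℤ) : ℂ :=
  ∫ t : ℝ, Complex.exp (-Complex.I * σ * t) * fourierCoeff (v t) k

/-- The (continuous) Bourgain `X^{s,b}` norm, valued in `ℝ≥0∞`. -/
def XcNorm (s b : ℝ) (v : ℝ → Torus → ℂ) : ℝ≥0∞ :=
  (∫⁻ σ : ℝ, ∑' k : ℤ,
      ENNReal.ofReal ((1 + |(k : ℝ)|) ^ (2 * s) * (1 + |σ + (k : ℝ) ^ 2|) ^ (2 * b)
        * ‖stFT v σ k‖ ^ 2)) ^ (1 / 2 : ℝ)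

/-- The restriction norm `‖u‖_{X^{s,b}(T)}` is bounded by `M`: some extension of `u`
from `(0,T)` has `X^{s,b}` norm at most `M`. -/
def XresBounded (s b T : ℝ) (u : ℝ → Torus → ℂ) (M : ℝ≥0∞) : Prop :=
  ∃ v : ℝ → Torus → ℂ, (∀ t ∈ Set.Ioo 0 T, v t = u t) ∧ XcNorm s b v ≤ M

/-- `u` is a Bourgain-class solution of cubic NLS on `[0,T]` with datum `u₀`. -/
def IsNLSSolution (μ T : ℝ) (u₀ : Torus → ℂ) (u : ℝ → Torus → ℂ) : Prop :=
  ContL2On (Set.Icc 0 T) u ∧ SpaceTimeL4 T u ∧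
  (∃ b ∈ Set.Ioo (1 / 2 : ℝ) (5 / 8 : ℝ), ∃ v : ℝ → Torus → ℂ,
      (∀ t ∈ Set.Ioo 0 T, v t = u t) ∧ XcNorm 0 b v < ⊤) ∧
  u 0 = u₀ ∧ DistribSolOn μ T u

/-- One step of the pointwise nonlinear flow `e^{iμτ|Π_τ f|²} Π_τ f`. -/
def lieFlow (μ τ : ℝ) (f : Torus → ℂ) : Torus → ℂ := fun x =>
  Complex.exp (Complex.I * μ * τ * (‖projC τ f x‖ : ℂ) ^ 2) * projC τ f x

/-- The filtered Lie splitting scheme `u⁰ = Π_τ u₀`,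
`u^{n+1} = e^{iτ∂_x²} Π_τ (e^{iμτ|Π_τ uⁿ|²} Π_τ uⁿ)`. -/
def lieScheme (μ τ : ℝ) (u₀ : Torus → ℂ) : ℕ → Torus → ℂ
  | 0 => projC τ u₀
  | n + 1 => schrod τ (projC τ (lieFlow μ τ (lieScheme μ τ u₀ n)))

/-- `d_τ(σ) = (e^{iτσ}-1)/τ`. -/
def dtau (τ σ : ℝ) : ℂ := (Complex.exp (Complex.I * τ * σ) - 1) / τ

/-- The discrete Bourgain `X^{s,b}_τ` norm of a sequence of functions on the torus. -/
def XdNorm (τ s b : ℝ) (u : ℤ → Torus → ℂ) : ℝ :=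
  Real.sqrt (∫ σ in Set.Ioc (-(Real.pi / τ)) (Real.pi / τ),
    ∑' k : ℤ, jbr k ^ (2 * s) * jbr ‖dtau τ (σ - (k : ℝ) ^ 2)‖ ^ (2 * b) *
      ‖(τ : ℂ) * ∑' m : ℤ, fourierCoeff (u m) k * Complex.exp (Complex.I * m * τ * σ)‖ ^ 2)

/-- The discrete space-time Lebesgue norm `‖(u_n)‖_{ℓ^p_τ L^q}`. -/
def lpLqNorm (τ p q : ℝ) (u : ℤ → Torus → ℂ) : ℝ :=
  (τ * ∑' n : ℤ, (eLpNorm (u n) (ENNReal.ofReal q) haarAddCircle).toReal ^ p) ^ (1 / p)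

/-!
On the Fourier side, pointwise products become convolutions on the phase space `ℤ × ℝ/(2π/τ)ℤ`.
Pairing the trilinear convolution with a fourth function and applying Cauchy–Schwarz reduces the
estimate, by duality, to the bilinear bound
`‖f ⋆ g‖_{L²} ≲ ‖⟨d_τ(σ - k²)⟩^{3/8} f‖_{L²} ‖⟨d_τ(σ - k²)⟩^{3/8} g‖_{L²}`
for `f`, `g` supported in `|k| ≤ τ^{-1/2}`; the Sobolev weights are submultiplicative and are
absorbed into the factors.

For the bilinear bound, `f` and `g` are split into dyadic blocks where the modulation
`⟨d_τ(σ - k²)⟩` is about `2^m`, resp. `2^n`. By Cauchy–Schwarz the interaction of two blocks is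
controlled by the measure of the set of `(l, t)` such that `(l, t)` and `(k - l, σ - t)` lie in
them. There `t` is confined to an arc of length `≲ 2^{min(m,n)}`, while `l² + (k - l)²` is confined
to an arc of length `≲ 2^{max(m,n)}`. The cutoff keeps this quantity within half a period, so that
`(2l - k)²` lies in a genuine interval and `l` takes `≲ 2^{max(m,n)/2}` values. Compared with the
weights `2^{3m/8}` and `2^{3n/8}` this leaves a gain of `2^{-|m-n|/8}`, which Schur's test sums.
-/

section Lebesgue

variable {α : Type*} [MeasurableSpace α] {μ : Measure α}

lemma eLpNorm_two_sq (f : α → ℝ≥0∞) (μ : Measure α) :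
    eLpNorm f 2 μ ^ 2 = ∫⁻ x, f x ^ 2 ∂μ := by
  rw [eLpNorm_eq_lintegral_rpow_enorm_toReal two_ne_zero ENNReal.ofNat_ne_top,
    ← ENNReal.rpow_natCast, ← ENNReal.rpow_mul]
  simp

lemma lintegral_mul_le_eLpNorm_two_mul {f g : α → ℝ≥0∞} (hf : Measurable f) (hg : Measurable g) :
    ∫⁻ x, f x * g x ∂μ ≤ eLpNorm f 2 μ * eLpNorm g 2 μ := by
  simpa [eLpNorm_eq_lintegral_rpow_enorm_toReal] using
    ENNReal.lintegral_mul_le_Lp_mul_Lq μ Real.HolderConjugate.two_two hf.aemeasurable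
      hg.aemeasurable

lemma eLpNorm_two_tsum_le {ι : Type*} [Countable ι] {f : ι → α → ℝ≥0∞}
    (hf : ∀ i, Measurable (f i)) :
    eLpNorm (fun x ↦ ∑' i, f i x) 2 μ ≤ ∑' i, eLpNorm (f i) 2 μ := by
  rw [← ENNReal.pow_le_pow_left_iff two_ne_zero, eLpNorm_two_sq]
  simp only [sq, ← ENNReal.tsum_mul_left, ← ENNReal.tsum_mul_right]
  rw [lintegral_tsum fun i ↦ by fun_prop]
  refine ENNReal.tsum_le_tsum fun i ↦ ?_
  rw [lintegral_tsum fun j ↦ by fun_prop]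
  exact ENNReal.tsum_le_tsum fun j ↦ lintegral_mul_le_eLpNorm_two_mul (hf j) (hf i)

lemma eLpNorm_two_le_of_lintegral_sq_le {f : α → ℝ≥0∞} {C : ℝ≥0∞} (hf : eLpNorm f 2 μ ≠ ⊤)
    (hC : ∫⁻ x, f x ^ 2 ∂μ ≤ C * eLpNorm f 2 μ) : eLpNorm f 2 μ ≤ C := by
  rcases eq_or_ne (eLpNorm f 2 μ) 0 with hzero | hne
  · exact hzero ▸ zero_le
  · rwa [← eLpNorm_two_sq, sq, ENNReal.mul_le_mul_iff_left hne hf] at hC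

lemma eLpNorm_two_const_mul (c : ℝ≥0∞) {f : α → ℝ≥0∞} (hf : Measurable f) :
    eLpNorm (fun x ↦ c * f x) 2 μ = c * eLpNorm f 2 μ := by
  rw [← (ENNReal.pow_right_strictMono two_ne_zero).injective.eq_iff, mul_pow, eLpNorm_two_sq,
    eLpNorm_two_sq, ← lintegral_const_mul _ (by fun_prop)]
  simp only [mul_pow]

end Lebesgue

section Schur

lemma tsum_mul_sq_le {ι : Type*} [Countable ι] (a b : ι → ℝ≥0∞) :
    (∑' i, a i * b i) ^ 2 ≤ (∑' i, a i ^ 2) * ∑' i, b i ^ 2 := by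
  let _ : MeasurableSpace ι := ⊤
  have h := lintegral_mul_le_eLpNorm_two_mul (μ := Measure.count)
    (measurable_from_top (f := a)) (measurable_from_top (f := b))
  have h_sq := pow_le_pow_left' h 2
  rwa [mul_pow, eLpNorm_two_sq, eLpNorm_two_sq, lintegral_count, lintegral_count,
    lintegral_count] at h_sq

lemma schur_test {ι κ : Type*} [Countable ι] [Countable κ] {K : ι → κ → ℝ≥0∞} {C : ℝ≥0∞}
    (hrow : ∀ i, ∑' j, K i j ≤ C) (hcol : ∀ j, ∑' i, K i j ≤ C) (a : ι → ℝ≥0∞) (b : κ → ℝ≥0∞) :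
    (∑' p : ι × κ, K p.1 p.2 * (a p.1 * b p.2)) ^ 2
      ≤ C ^ 2 * ((∑' i, a i ^ 2) * ∑' j, b j ^ 2) := by
  have sqrt_sq (x : ℝ≥0∞) : (x ^ (1 / 2 : ℝ)) ^ 2 = x := by
    rw [← ENNReal.rpow_natCast, ← ENNReal.rpow_mul]; norm_num
  have hsplit (p : ι × κ) : K p.1 p.2 * (a p.1 * b p.2)
      = (K p.1 p.2 ^ (1 / 2 : ℝ) * a p.1) * (K p.1 p.2 ^ (1 / 2 : ℝ) * b p.2) := by
    nth_rw 1 [← sqrt_sq (K p.1 p.2)]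
    ring
  have hleft : ∑' p : ι × κ, (K p.1 p.2 ^ (1 / 2 : ℝ) * a p.1) ^ 2 ≤ C * ∑' i, a i ^ 2 := by
    simp only [mul_pow, sqrt_sq, ENNReal.tsum_prod', ENNReal.tsum_mul_right,
      ← ENNReal.tsum_mul_left]
    gcongr with i
    exact hrow i
  have hright : ∑' p : ι × κ, (K p.1 p.2 ^ (1 / 2 : ℝ) * b p.2) ^ 2 ≤ C * ∑' j, b j ^ 2 := by
    rw [ENNReal.tsum_prod', ENNReal.tsum_comm]
    simp only [mul_pow, sqrt_sq, ENNReal.tsum_mul_right, ← ENNReal.tsum_mul_left]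
    gcongr with j
    exact hcol j
  calc (∑' p : ι × κ, K p.1 p.2 * (a p.1 * b p.2)) ^ 2
      ≤ (∑' p : ι × κ, (K p.1 p.2 ^ (1 / 2 : ℝ) * a p.1) ^ 2)
        * ∑' p : ι × κ, (K p.1 p.2 ^ (1 / 2 : ℝ) * b p.2) ^ 2 := by
        simp only [hsplit]
        exact tsum_mul_sq_le _ _
    _ ≤ (C * ∑' i, a i ^ 2) * (C * ∑' j, b j ^ 2) := mul_le_mul' hleft hright
    _ = C ^ 2 * ((∑' i, a i ^ 2) * ∑' j, b j ^ 2) := by ring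

lemma tsum_pow_dist_le (r : ℝ≥0∞) (m : ℕ) : ∑' n, r ^ Nat.dist m n ≤ 2 * (1 - r)⁻¹ := by
  have hlow : ∑ n ∈ Finset.range m, r ^ Nat.dist m n ≤ (1 - r)⁻¹ := by
    rw [← ENNReal.tsum_geometric, ← Finset.sum_range_reflect]
    calc ∑ j ∈ Finset.range m, r ^ Nat.dist m (m - 1 - j)
        = ∑ j ∈ Finset.range m, r ^ (j + 1) := by
          refine Finset.sum_congr rfl fun j hj ↦ ?_
          congr 1
          have := Finset.mem_range.1 hj
          simp only [Nat.dist]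
          lia
      _ ≤ ∑' j, r ^ (j + 1) := ENNReal.sum_le_tsum _
      _ ≤ ∑' j, r ^ j := ENNReal.tsum_comp_le_tsum_of_injective (add_left_injective 1) _
  have hhigh : ∑' n, r ^ Nat.dist m (n + m) = (1 - r)⁻¹ := by
    rw [← ENNReal.tsum_geometric]
    congr! 3 with n
    simp [Nat.dist]
  rw [← ENNReal.summable.sum_add_tsum_nat_add' (f := fun n ↦ r ^ Nat.dist m n) (k := m), hhigh,
    two_mul]
  gcongr

end Schur

section Convolution

lemma tsum_indicator_eq_of_support_subset {α ι : Type*} {A : ι → Set α}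
    (hA : Pairwise (Function.onFun Disjoint A)) {f : α → ℝ≥0∞}
    (hf : Function.support f ⊆ ⋃ i, A i) (x : α) : ∑' i, (A i).indicator f x = f x := by
  by_cases hx : x ∈ ⋃ i, A i
  · obtain ⟨i, hi⟩ := Set.mem_iUnion.1 hx
    rw [tsum_eq_single i fun j hj ↦ Set.indicator_of_notMem
      (Set.disjoint_left.1 (hA hj.symm) hi) f, Set.indicator_of_mem hi]
  · have hfx : f x = 0 := by_contra fun h ↦ hx (hf h)
    simp [hfx]

lemma tsum_eLpNorm_indicator_sq_le {α ι : Type*} [MeasurableSpace α] {μ : Measure α} [Countable ι]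
    {A : ι → Set α} (hA : ∀ i, MeasurableSet (A i))
    (hdisj : Pairwise (Function.onFun Disjoint A)) (f : α → ℝ≥0∞) :
    ∑' i, eLpNorm ((A i).indicator f) 2 μ ^ 2 ≤ eLpNorm f 2 μ ^ 2 := by
  simp only [eLpNorm_indicator_eq_eLpNorm_restrict (hA _), eLpNorm_two_sq]
  rw [← lintegral_iUnion hA hdisj]
  exact setLIntegral_le_lintegral _ _

variable {G : Type*} [MeasurableSpace G] {μ : Measure G}

lemma lconvolution_mono [Add G] [Neg G] {f₁ f₂ g₁ g₂ : G → ℝ≥0∞} (hf : f₁ ≤ f₂) (hg : g₁ ≤ g₂) :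
    f₁ ⋆ₗ[μ] g₁ ≤ f₂ ⋆ₗ[μ] g₂ :=
  fun _ ↦ lintegral_mono fun y ↦ mul_le_mul' (hf y) (hg _)

section AddGroup

variable [AddGroup G] [MeasurableAdd₂ G] [MeasurableNeg G]

lemma lconvolution_sq_le {A B : Set G} (hA : MeasurableSet A) (hB : MeasurableSet B)
    {f g : G → ℝ≥0∞} (hf : Measurable f) (hg : Measurable g) (hfA : Function.support f ⊆ A)
    (hgB : Function.support g ⊆ B) (x : G) :
    (f ⋆ₗ[μ] g) x ^ 2
      ≤ μ {y | y ∈ A ∧ -y + x ∈ B} * ∫⁻ y, f y ^ 2 * g (-y + x) ^ 2 ∂μ := by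
  set S := {y | y ∈ A ∧ -y + x ∈ B}
  have hS : MeasurableSet S :=
    hA.inter ((by fun_prop : Measurable fun y ↦ -y + x) hB)
  have hindicator : (f ⋆ₗ[μ] g) x = ∫⁻ y, S.indicator 1 y * (f y * g (-y + x)) ∂μ := by
    rw [lconvolution_def]
    refine lintegral_congr fun y ↦ ?_
    by_cases hy : y ∈ S
    · simp [hy]
    · have : f y * g (-y + x) = 0 := by
        by_contra h
        exact hy ⟨hfA (left_ne_zero_of_mul h), hgB (right_ne_zero_of_mul h)⟩
      rw [this, mul_zero]
  have hμS : eLpNorm (S.indicator (1 : G → ℝ≥0∞)) 2 μ ^ 2 = μ S := by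
    rw [eLpNorm_indicator_eq_eLpNorm_restrict hS, eLpNorm_two_sq]
    simp
  calc (f ⋆ₗ[μ] g) x ^ 2
      ≤ (eLpNorm (S.indicator 1) 2 μ * eLpNorm (fun y ↦ f y * g (-y + x)) 2 μ) ^ 2 := by
        rw [hindicator]
        gcongr
        exact lintegral_mul_le_eLpNorm_two_mul (measurable_one.indicator hS) (by fun_prop)
    _ = μ S * ∫⁻ y, f y ^ 2 * g (-y + x) ^ 2 ∂μ := by
        simp only [mul_pow, hμS, eLpNorm_two_sq]

lemma mul_lconvolution_le_of_submultiplicative {ω : G → ℝ≥0∞} {c : ℝ≥0∞} (hω : Measurable ω)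
    (hsub : ∀ x y, ω (x + y) ≤ c * (ω x * ω y)) {f g : G → ℝ≥0∞} (hf : Measurable f)
    (hg : Measurable g) (x : G) :
    ω x * (f ⋆ₗ[μ] g) x ≤ c * ((fun y ↦ ω y * f y) ⋆ₗ[μ] fun y ↦ ω y * g y) x := by
  rw [lconvolution_def, lconvolution_def, ← lintegral_const_mul _ (by fun_prop),
    ← lintegral_const_mul _ (by fun_prop)]
  refine lintegral_mono fun y ↦ ?_
  calc ω x * (f y * g (-y + x)) = ω (y + (-y + x)) * (f y * g (-y + x)) := by
        rw [add_neg_cancel_left]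
    _ ≤ c * (ω y * ω (-y + x)) * (f y * g (-y + x)) := by gcongr; exact hsub _ _
    _ = c * (ω y * f y * (ω (-y + x) * g (-y + x))) := by ring

lemma mul_lconvolution_lconvolution_le_of_submultiplicative [SFinite μ] {ω : G → ℝ≥0∞} {c : ℝ≥0∞}
    (hω : Measurable ω) (hsub : ∀ x y, ω (x + y) ≤ c * (ω x * ω y)) {f g h : G → ℝ≥0∞}
    (hf : Measurable f) (hg : Measurable g) (hh : Measurable h) (x : G) :
    ω x * (f ⋆ₗ[μ] (g ⋆ₗ[μ] h)) x
      ≤ c ^ 2 * ((fun y ↦ ω y * f y) ⋆ₗ[μ]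
        ((fun y ↦ ω y * g y) ⋆ₗ[μ] fun y ↦ ω y * h y)) x := by
  have hgh := measurable_lconvolution μ hg hh
  have := measurable_lconvolution μ (hω.mul hg) (hω.mul hh)
  refine (mul_lconvolution_le_of_submultiplicative hω hsub hf hgh x).trans ?_
  rw [lconvolution_def, lconvolution_def, ← lintegral_const_mul _ (by fun_prop),
    ← lintegral_const_mul _ (by fun_prop)]
  refine lintegral_mono fun y ↦ ?_
  calc c * (ω y * f y * (ω (-y + x) * (g ⋆ₗ[μ] h) (-y + x)))
      ≤ c * (ω y * f y * (c * ((fun y ↦ ω y * g y) ⋆ₗ[μ] fun y ↦ ω y * h y) (-y + x))) := by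
        gcongr c * (ω y * f y * ?_)
        exact mul_lconvolution_le_of_submultiplicative hω hsub hg hh _
    _ = _ := by ring

lemma lconvolution_eq_tsum_indicator {ι : Type*} [Countable ι] {A : ι → Set G}
    (hA : ∀ i, MeasurableSet (A i)) (hdisj : Pairwise (Function.onFun Disjoint A))
    {f g : G → ℝ≥0∞} (hf : Measurable f) (hg : Measurable g)
    (hfA : Function.support f ⊆ ⋃ i, A i) (hgA : Function.support g ⊆ ⋃ i, A i) :
    f ⋆ₗ[μ] g = fun x ↦ ∑' p : ι × ι, ((A p.1).indicator f ⋆ₗ[μ] (A p.2).indicator g) x := by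
  ext x
  have hmeas (p : ι × ι) :
      AEMeasurable (fun y ↦ (A p.1).indicator f y * (A p.2).indicator g (-y + x)) μ :=
    ((hf.indicator (hA _)).mul ((hg.indicator (hA _)).comp (by fun_prop))).aemeasurable
  simp only [lconvolution_def]
  rw [← lintegral_tsum hmeas]
  refine lintegral_congr fun y ↦ ?_
  simp only [ENNReal.tsum_prod', ENNReal.tsum_mul_left, ENNReal.tsum_mul_right,
    tsum_indicator_eq_of_support_subset hdisj hfA, tsum_indicator_eq_of_support_subset hdisj hgA]

variable [SFinite μ] [μ.IsAddLeftInvariant]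

lemma eLpNorm_lconvolution_sq_le {A B : Set G} (hA : MeasurableSet A) (hB : MeasurableSet B)
    {K : ℝ≥0∞} (hK : ∀ x, μ {y | y ∈ A ∧ -y + x ∈ B} ≤ K) {f g : G → ℝ≥0∞} (hf : Measurable f)
    (hg : Measurable g) (hfA : Function.support f ⊆ A) (hgB : Function.support g ⊆ B) :
    eLpNorm (f ⋆ₗ[μ] g) 2 μ ^ 2 ≤ K * (eLpNorm f 2 μ ^ 2 * eLpNorm g 2 μ ^ 2) := by
  have hmeas : Measurable (Function.uncurry fun x y ↦ f y ^ 2 * g (-y + x) ^ 2) := by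
    simp only [Function.uncurry_def]
    fun_prop
  simp only [eLpNorm_two_sq]
  calc ∫⁻ x, (f ⋆ₗ[μ] g) x ^ 2 ∂μ
      ≤ ∫⁻ x, K * ∫⁻ y, f y ^ 2 * g (-y + x) ^ 2 ∂μ ∂μ := by
        refine lintegral_mono fun x ↦ (lconvolution_sq_le hA hB hf hg hfA hgB x).trans ?_
        gcongr
        exact hK x
    _ = K * ∫⁻ y, ∫⁻ x, f y ^ 2 * g (-y + x) ^ 2 ∂μ ∂μ := by
        rw [lintegral_const_mul _ hmeas.lintegral_prod_right,
          lintegral_lintegral_swap hmeas.aemeasurable]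
    _ = K * ∫⁻ y, f y ^ 2 * ∫⁻ x, g x ^ 2 ∂μ ∂μ := by
        congr! 3 with y
        rw [lintegral_const_mul _ (by fun_prop), lintegral_add_left_eq_self (fun x ↦ g x ^ 2)]
    _ = K * ((∫⁻ x, f x ^ 2 ∂μ) * ∫⁻ x, g x ^ 2 ∂μ) := by
        rw [lintegral_mul_const _ (by fun_prop)]

section Blocks

variable {ι : Type*} {A : ι → Set G} {κ : ι → ι → ℝ≥0∞} {ω : ι → ℝ≥0∞}
  {w f g : G → ℝ≥0∞}

lemma eLpNorm_lconvolution_indicator_le (hA : ∀ i, MeasurableSet (A i))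
    (hκ : ∀ i j x, μ {y | y ∈ A i ∧ -y + x ∈ A j} ≤ (κ i j * (ω i * ω j)) ^ 2)
    (hω : ∀ i, ∀ x ∈ A i, ω i ≤ w x) (hf : Measurable f) (hg : Measurable g) (i j : ι) :
    eLpNorm ((A i).indicator f ⋆ₗ[μ] (A j).indicator g) 2 μ
      ≤ κ i j * (eLpNorm ((A i).indicator fun x ↦ w x * f x) 2 μ
        * eLpNorm ((A j).indicator fun x ↦ w x * g x) 2 μ) := by
  have hweight {h : G → ℝ≥0∞} (hh : Measurable h) (i : ι) :
      ω i * eLpNorm ((A i).indicator h) 2 μ ≤ eLpNorm ((A i).indicator fun x ↦ w x * h x) 2 μ := by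
    rw [← eLpNorm_two_const_mul _ (hh.indicator (hA i))]
    refine eLpNorm_mono_enorm fun x ↦ ?_
    by_cases hx : x ∈ A i
    · simpa [hx] using mul_le_mul_left (hω i x hx) _
    · simp [hx]
  have hblock := eLpNorm_lconvolution_sq_le (hA i) (hA j) (hκ i j) (hf.indicator (hA i))
    (hg.indicator (hA j)) Set.support_indicator_subset Set.support_indicator_subset
  rw [← mul_pow, ← mul_pow, ENNReal.pow_le_pow_left_iff two_ne_zero] at hblock
  calc _ ≤ κ i j * (ω i * ω j)
        * (eLpNorm ((A i).indicator f) 2 μ * eLpNorm ((A j).indicator g) 2 μ) := hblock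
    _ = κ i j * ((ω i * eLpNorm ((A i).indicator f) 2 μ)
        * (ω j * eLpNorm ((A j).indicator g) 2 μ)) := by ring
    _ ≤ _ := by gcongr <;> exact hweight ‹_› _

theorem eLpNorm_lconvolution_le_of_blocks [Countable ι] {C : ℝ≥0∞} (hA : ∀ i, MeasurableSet (A i))
    (hdisj : Pairwise (Function.onFun Disjoint A))
    (hκ : ∀ i j x, μ {y | y ∈ A i ∧ -y + x ∈ A j} ≤ (κ i j * (ω i * ω j)) ^ 2)
    (hrow : ∀ i, ∑' j, κ i j ≤ C) (hcol : ∀ j, ∑' i, κ i j ≤ C)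
    (hω : ∀ i, ∀ x ∈ A i, ω i ≤ w x) (hf : Measurable f) (hg : Measurable g)
    (hfA : Function.support f ⊆ ⋃ i, A i) (hgA : Function.support g ⊆ ⋃ i, A i) :
    eLpNorm (f ⋆ₗ[μ] g) 2 μ
      ≤ C * (eLpNorm (fun x ↦ w x * f x) 2 μ * eLpNorm (fun x ↦ w x * g x) 2 μ) := by
  let a (h : G → ℝ≥0∞) (i : ι) : ℝ≥0∞ := eLpNorm ((A i).indicator fun x ↦ w x * h x) 2 μ
  have hsum : eLpNorm (f ⋆ₗ[μ] g) 2 μ ≤ ∑' p : ι × ι, κ p.1 p.2 * (a f p.1 * a g p.2) := by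
    rw [lconvolution_eq_tsum_indicator hA hdisj hf hg hfA hgA]
    exact (eLpNorm_two_tsum_le fun p ↦ measurable_lconvolution μ (hf.indicator (hA _))
      (hg.indicator (hA _))).trans <| ENNReal.tsum_le_tsum fun p ↦
        eLpNorm_lconvolution_indicator_le hA hκ hω hf hg p.1 p.2
  rw [← ENNReal.pow_le_pow_left_iff two_ne_zero]
  calc eLpNorm (f ⋆ₗ[μ] g) 2 μ ^ 2
      ≤ (∑' p : ι × ι, κ p.1 p.2 * (a f p.1 * a g p.2)) ^ 2 := pow_le_pow_left' hsum 2
    _ ≤ C ^ 2 * ((∑' i, a f i ^ 2) * ∑' j, a g j ^ 2) := schur_test hrow hcol _ _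
    _ ≤ C ^ 2 * (eLpNorm (fun x ↦ w x * f x) 2 μ ^ 2
        * eLpNorm (fun x ↦ w x * g x) 2 μ ^ 2) := by
        gcongr <;> exact tsum_eLpNorm_indicator_sq_le hA hdisj _
    _ = _ := by ring

end Blocks

end AddGroup

section AddCommGroup

variable [SFinite μ] [AddCommGroup G] [MeasurableAdd₂ G] [MeasurableNeg G] {z f g h : G → ℝ≥0∞}

-- Expanding both squares over pairs `(p₁, p₂)`, the reflection `y ↦ p₁ + p₂ - y` exchanges them.
lemma eLpNorm_correlation_eq_eLpNorm_lconvolution [μ.IsAddLeftInvariant] [μ.IsNegInvariant]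
    (hz : Measurable z) (hh : Measurable h) :
    eLpNorm (fun y ↦ ∫⁻ x, z x * h (-y + x) ∂μ) 2 μ = eLpNorm (z ⋆ₗ[μ] h) 2 μ := by
  have hexpand (k : G → G → ℝ≥0∞) (hk : Measurable (Function.uncurry k)) :
      ∫⁻ y, (∫⁻ x, z x * k y x ∂μ) ^ 2 ∂μ
        = ∫⁻ p : G × G, ∫⁻ y, z p.1 * k y p.1 * (z p.2 * k y p.2) ∂μ ∂(μ.prod μ) := by
    have hky (y : G) : AEMeasurable (fun x ↦ z x * k y x) μ := by fun_prop
    simp only [sq, ← lintegral_prod_mul (hky _) (hky _)]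
    rw [lintegral_lintegral_swap (by simp only [Function.uncurry_def]; fun_prop)]
  rw [← (ENNReal.pow_right_strictMono two_ne_zero).injective.eq_iff, eLpNorm_two_sq,
    eLpNorm_two_sq, hexpand (fun y x ↦ h (-y + x)) (by simp only [Function.uncurry_def]; fun_prop)]
  simp only [lconvolution_def]
  rw [hexpand (fun y x ↦ h (-x + y)) (by simp only [Function.uncurry_def]; fun_prop)]
  refine lintegral_congr fun p ↦ ?_
  rw [← lintegral_sub_left_eq_self _ (p.1 + p.2)]
  refine lintegral_congr fun y ↦ ?_
  rw [show -(p.1 + p.2 - y) + p.1 = -p.2 + y by abel,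
    show -(p.1 + p.2 - y) + p.2 = -p.1 + y by abel]
  ring

lemma lintegral_mul_lconvolution (hz : Measurable z) (hf : Measurable f) (hh : Measurable h) :
    ∫⁻ x, z x * (f ⋆ₗ[μ] h) x ∂μ = ∫⁻ y, f y * ∫⁻ x, z x * h (-y + x) ∂μ ∂μ := by
  have hx (x : G) : z x * (f ⋆ₗ[μ] h) x = ∫⁻ y, z x * (f y * h (-y + x)) ∂μ := by
    rw [lconvolution_def, lintegral_const_mul _ (by fun_prop)]
  simp only [hx]
  rw [lintegral_lintegral_swap (by simp only [Function.uncurry_def]; fun_prop)]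
  refine lintegral_congr fun y ↦ ?_
  rw [← lintegral_const_mul _ (by fun_prop)]
  simp only [mul_left_comm]

theorem lintegral_mul_lconvolution_le [μ.IsAddLeftInvariant] [μ.IsNegInvariant]
    (hz : Measurable z) (hf : Measurable f) (hh : Measurable h) :
    ∫⁻ x, z x * (f ⋆ₗ[μ] h) x ∂μ ≤ eLpNorm f 2 μ * eLpNorm (z ⋆ₗ[μ] h) 2 μ := by
  rw [lintegral_mul_lconvolution hz hf hh, ← eLpNorm_correlation_eq_eLpNorm_lconvolution hz hh]
  refine lintegral_mul_le_eLpNorm_two_mul hf ?_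
  exact Measurable.lintegral_prod_right (f := fun y x ↦ z x * h (-y + x))
    (by simp only [Function.uncurry_def]; fun_prop)

end AddCommGroup

end Convolution

section Counting

lemma sub_sq_le_abs_sq_sub_sq {R : Type*} [CommRing R] [LinearOrder R] [IsStrictOrderedRing R]
    {x y : R} (hxy : 0 ≤ x * y) : (x - y) ^ 2 ≤ |x ^ 2 - y ^ 2| := by
  have hle : |x - y| ≤ |x + y| := sq_le_sq.1 (by linarith)
  calc (x - y) ^ 2 = |x - y| * |x - y| := by rw [sq, abs_mul_abs_self]
    _ ≤ |x + y| * |x - y| := by gcongr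
    _ = |x ^ 2 - y ^ 2| := by rw [← abs_mul, sq_sub_sq]

lemma card_le_of_abs_sub_le {U : Finset ℤ} {r : ℝ} (hr : 0 ≤ r)
    (hU : ∀ a ∈ U, ∀ b ∈ U, |(a : ℝ) - b| ≤ r) : (U.card : ℝ) ≤ r + 1 := by
  rcases U.eq_empty_or_nonempty with rfl | hne
  · simpa using by linarith
  have hsub : U ⊆ Finset.Icc (U.min' hne) (U.min' hne + ⌊r⌋) := by
    intro a ha
    have hle : ((a - U.min' hne : ℤ) : ℝ) ≤ r := by
      push_cast
      exact (le_abs_self _).trans (hU a ha _ (U.min'_mem hne))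
    exact Finset.mem_Icc.2 ⟨U.min'_le a ha, by linarith [Int.le_floor.2 hle]⟩
  have hcard : (U.card : ℤ) ≤ ⌊r⌋ + 1 := by
    have := Finset.card_le_card hsub
    rw [Int.card_Icc] at this
    have := Int.floor_nonneg.2 hr
    lia
  calc (U.card : ℝ) ≤ ⌊r⌋ + 1 := by exact_mod_cast hcard
    _ ≤ r + 1 := by gcongr; exact Int.floor_le r

lemma card_le_sqrt_add_two {U : Finset ℤ} {k : ℤ} {R : ℝ}
    (hU : ∀ a ∈ U, ∀ b ∈ U, |(2 * (a : ℝ) - k) ^ 2 - (2 * (b : ℝ) - k) ^ 2| ≤ R) :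
    (U.card : ℝ) ≤ √R + 2 := by
  have hdist {a b : ℤ} (ha : a ∈ U) (hb : b ∈ U) (hab : 0 ≤ (2 * (a : ℝ) - k) * (2 * b - k)) :
      |(a : ℝ) - b| ≤ √R / 2 := by
    have hsq := (sub_sq_le_abs_sq_sub_sq hab).trans (hU a ha b hb)
    have habs := Real.abs_le_sqrt hsq
    rw [show 2 * (a : ℝ) - k - (2 * b - k) = 2 * (a - b) by ring, abs_mul, abs_two] at habs
    linarith
  let right := U.filter fun a : ℤ ↦ 0 ≤ 2 * (a : ℝ) - k
  let left := U.filter fun a : ℤ ↦ ¬ 0 ≤ 2 * (a : ℝ) - k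
  have hright : (right.card : ℝ) ≤ √R / 2 + 1 :=
    card_le_of_abs_sub_le (by positivity) fun a ha b hb ↦ by
      rw [Finset.mem_filter] at ha hb
      exact hdist ha.1 hb.1 (mul_nonneg ha.2 hb.2)
  have hleft : (left.card : ℝ) ≤ √R / 2 + 1 :=
    card_le_of_abs_sub_le (by positivity) fun a ha b hb ↦ by
      rw [Finset.mem_filter, not_le] at ha hb
      exact hdist ha.1 hb.1 (mul_nonneg_of_nonpos_of_nonpos ha.2.le hb.2.le)
  have hcard : (U.card : ℝ) = right.card + left.card := by
    exact_mod_cast (Finset.card_filter_add_card_filter_not _).symm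
  linarith

end Counting

section PhaseSpace

lemma isNegInvariant_prod {G H : Type*} [MeasurableSpace G] [MeasurableSpace H] [AddGroup G]
    [AddGroup H] [MeasurableNeg G] [MeasurableNeg H] (μ : Measure G) (ν : Measure H)
    [SFinite μ] [SFinite ν] [μ.IsNegInvariant] [ν.IsNegInvariant] :
    (μ.prod ν).IsNegInvariant := by
  constructor
  rw [Measure.neg]
  calc (μ.prod ν).map Neg.neg = (μ.map Neg.neg).prod (ν.map Neg.neg) :=
        (Measure.map_prod_map μ ν measurable_neg measurable_neg).symm
    _ = μ.prod ν := by rw [Measure.map_neg_eq_self, Measure.map_neg_eq_self]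

lemma count_prod_le_card_mul {α β : Type*} [MeasurableSpace α] [MeasurableSingletonClass α]
    [Countable α] [MeasurableSpace β] {ν : Measure β} [SFinite ν] {E : Set (α × β)}
    (hE : MeasurableSet E) {S : Finset α} (hS : ∀ y ∈ E, y.1 ∈ S) {V : ℝ≥0∞}
    (hV : ∀ a, ν (Prod.mk a ⁻¹' E) ≤ V) : (Measure.count.prod ν) E ≤ S.card * V := by
  rw [Measure.prod_apply hE, lintegral_count, tsum_eq_sum (s := S), ← nsmul_eq_mul]
  · exact Finset.sum_le_card_nsmul _ _ _ fun a _ ↦ hV a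
  · intro a ha
    have hempty : Prod.mk a ⁻¹' E = ∅ := Set.eq_empty_of_forall_notMem fun b hb ↦ ha (hS _ hb)
    rw [hempty, measure_empty]

/-- The measure on the Fourier side `ℤ × ℝ/Tℤ` of sequences of functions on the torus: counting
measure in the frequency `k`, Lebesgue measure in the time frequency `σ`. -/
abbrev phaseMeasure (T : ℝ) [Fact (0 < T)] : Measure (ℤ × AddCircle T) :=
  Measure.count.prod volume

instance isNegInvariant_phaseMeasure (T : ℝ) [Fact (0 < T)] : (phaseMeasure T).IsNegInvariant :=
  isNegInvariant_prod _ _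

/-- The displacement `σ - k²` of a phase-space point `(k, σ)` from the parabola `σ = k²`. -/
def parabolaOffset {T : ℝ} (x : ℤ × AddCircle T) : AddCircle T := x.2 - ((x.1 : ℝ) ^ 2 : ℝ)

variable {T : ℝ}

lemma measurable_parabolaOffset [Fact (0 < T)] : Measurable (parabolaOffset (T := T)) :=
  measurable_snd.sub
    ((measurable_of_countable fun k : ℤ ↦ (((k : ℝ) ^ 2 : ℝ) : AddCircle T)).comp measurable_fst)

/-- The points `y` for which `y` and `x - y` are both close to the parabola and both have
frequency small enough that sums of two squared frequencies do not wrap around the circle. -/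
def nearParabolaPairs (M N : ℝ) (x : ℤ × AddCircle T) : Set (ℤ × AddCircle T) :=
  {y | ((y.1 : ℝ) ^ 2 ≤ T / 4 ∧ ‖parabolaOffset y‖ ≤ M) ∧
    (((-y + x).1 : ℝ) ^ 2 ≤ T / 4 ∧ ‖parabolaOffset (-y + x)‖ ≤ N)}

lemma abs_sub_le_of_mem_nearParabolaPairs [hT : Fact (0 < T)] {M N : ℝ} {x y z : ℤ × AddCircle T}
    (hy : y ∈ nearParabolaPairs M N x) (hz : z ∈ nearParabolaPairs M N x) :
    |(2 * (y.1 : ℝ) - x.1) ^ 2 - (2 * (z.1 : ℝ) - x.1) ^ 2| ≤ 4 * (M + N) := by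
  let phase (y : ℤ × AddCircle T) : ℝ := (y.1 : ℝ) ^ 2 + ((-y + x).1 : ℝ) ^ 2
  have hphase {y} (hy : y ∈ nearParabolaPairs M N x) :
      ‖x.2 - (phase y : AddCircle T)‖ ≤ M + N ∧ phase y ∈ Set.Icc 0 (T / 2) := by
    obtain ⟨⟨hy₁, hyM⟩, hxy₁, hyN⟩ := hy
    refine ⟨?_, by positivity, by linarith⟩
    have hsum : x.2 - (phase y : AddCircle T) = parabolaOffset y + parabolaOffset (-y + x) := by
      simp only [phase, parabolaOffset, Prod.snd_add, Prod.snd_neg, coe_add]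
      abel
    rw [hsum]
    exact (norm_add_le _ _).trans (add_le_add hyM hyN)
  obtain ⟨hyn, hy0, hyT⟩ := hphase hy
  obtain ⟨hzn, hz0, hzT⟩ := hphase hz
  have hle : |phase y - phase z| ≤ T / 2 := abs_sub_le_of_nonneg_of_le hy0 hyT hz0 hzT
  have hnorm : ‖((phase y - phase z : ℝ) : AddCircle T)‖ = |phase y - phase z| :=
    (norm_coe_eq_abs_iff T hT.out.ne').2 (by rwa [abs_of_pos hT.out])
  have hdiff : ‖((phase y - phase z : ℝ) : AddCircle T)‖ ≤ (M + N) + (M + N) := by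
    rw [coe_sub, ← sub_sub_sub_cancel_left _ _ x.2]
    exact (norm_sub_le _ _).trans (add_le_add hzn hyn)
  have hsq : (2 * (y.1 : ℝ) - x.1) ^ 2 - (2 * (z.1 : ℝ) - x.1) ^ 2 = 2 * (phase y - phase z) := by
    simp only [phase, Prod.fst_add, Prod.fst_neg]
    push_cast
    ring
  rw [hsq, abs_mul, abs_two, ← hnorm]
  linarith

lemma volume_section_nearParabolaPairs_le [Fact (0 < T)] (M N : ℝ) (x : ℤ × AddCircle T) (l : ℤ) :
    volume (Prod.mk l ⁻¹' nearParabolaPairs M N x) ≤ ENNReal.ofReal (2 * min M N) := by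
  have hvol (c : AddCircle T) (r : ℝ) :
      volume (Metric.closedBall c r) ≤ ENNReal.ofReal (2 * r) := by
    rw [AddCircle.volume_closedBall]
    exact ENNReal.ofReal_le_ofReal (min_le_right _ _)
  rw [mul_min_of_nonneg _ _ zero_le_two, ENNReal.ofReal_min]
  refine le_min ((measure_mono ?_).trans (hvol (((l : ℝ) ^ 2 : ℝ) : AddCircle T) M))
    ((measure_mono ?_).trans (hvol (x.2 - ((((-l + x.1 : ℤ) : ℝ) ^ 2 : ℝ) : AddCircle T)) N))
  · rintro t ⟨⟨-, ht⟩, -⟩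
    rwa [Metric.mem_closedBall, dist_eq_norm]
  · rintro t ⟨-, -, ht⟩
    rw [Metric.mem_closedBall, dist_comm, dist_eq_norm]
    have hcenter : x.2 - ((((-l + x.1 : ℤ) : ℝ) ^ 2 : ℝ) : AddCircle T) - t
        = parabolaOffset (-(l, t) + x) := by
      simp only [parabolaOffset, Prod.fst_add, Prod.snd_add, Prod.fst_neg, Prod.snd_neg]
      abel
    rwa [hcenter]

lemma measurableSet_nearParabolaPairs [Fact (0 < T)] (M N : ℝ) (x : ℤ × AddCircle T) :
    MeasurableSet (nearParabolaPairs M N x) := by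
  have hball (r : ℝ) : MeasurableSet
      {y : ℤ × AddCircle T | (y.1 : ℝ) ^ 2 ≤ T / 4 ∧ ‖parabolaOffset y‖ ≤ r} :=
    (measurableSet_le ((measurable_of_countable fun k : ℤ ↦ (k : ℝ) ^ 2).comp measurable_fst)
      measurable_const).inter
      (measurableSet_le measurable_parabolaOffset.norm measurable_const)
  exact (hball M).inter ((by fun_prop : Measurable fun y ↦ -y + x) (hball N))

theorem phaseMeasure_nearParabolaPairs_le [Fact (0 < T)] (M N : ℝ) (x : ℤ × AddCircle T) :
    phaseMeasure T (nearParabolaPairs M N x)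
      ≤ ENNReal.ofReal ((√(4 * (M + N)) + 2) * (2 * min M N)) := by
  have hfin : (Prod.fst '' nearParabolaPairs M N x).Finite := by
    refine (isCompact_closedBall (0 : ℤ) √(T / 4)).finite_of_discrete.subset ?_
    rintro _ ⟨y, hy, rfl⟩
    rw [mem_closedBall_zero_iff, Int.norm_eq_abs]
    exact Real.abs_le_sqrt hy.1.1
  have hcard : (hfin.toFinset.card : ℝ) ≤ √(4 * (M + N)) + 2 :=
    card_le_sqrt_add_two (k := x.1) fun a ha b hb ↦ by
      rw [Set.Finite.mem_toFinset] at ha hb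
      obtain ⟨y, hy, rfl⟩ := ha
      obtain ⟨z, hz, rfl⟩ := hb
      exact abs_sub_le_of_mem_nearParabolaPairs hy hz
  calc phaseMeasure T (nearParabolaPairs M N x)
      ≤ hfin.toFinset.card * ENNReal.ofReal (2 * min M N) :=
        count_prod_le_card_mul (measurableSet_nearParabolaPairs M N x)
          (fun y hy ↦ hfin.mem_toFinset.2 ⟨y, hy, rfl⟩) (volume_section_nearParabolaPairs_le M N x)
    _ ≤ ENNReal.ofReal (√(4 * (M + N)) + 2) * ENNReal.ofReal (2 * min M N) := by
        gcongr
        rw [← ENNReal.ofReal_natCast]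
        exact ENNReal.ofReal_le_ofReal hcard
    _ = _ := (ENNReal.ofReal_mul (by positivity)).symm

end PhaseSpace

section Modulation

lemma one_le_jbr (x : ℝ) : 1 ≤ jbr x := by
  rw [jbr, Real.one_le_sqrt]
  nlinarith [sq_nonneg x]

lemma jbr_pos (x : ℝ) : 0 < jbr x := one_pos.trans_le (one_le_jbr x)

lemma le_jbr (x : ℝ) : x ≤ jbr x :=
  Real.le_sqrt_of_sq_le (by linarith)

lemma continuous_jbr : Continuous jbr := by
  unfold jbr
  fun_prop

lemma fourier_coe_eq_exp {τ : ℝ} (hτ : τ ≠ 0) (n : ℤ) (σ : ℝ) :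
    (fourier n (σ : AddCircle (2 * Real.pi / τ)) : ℂ) = Complex.exp (Complex.I * n * τ * σ) := by
  rw [fourier_coe_apply]
  congr 1
  have : (τ : ℂ) ≠ 0 := mod_cast hτ
  have : (Real.pi : ℂ) ≠ 0 := mod_cast Real.pi_ne_zero
  push_cast
  field_simp

/-- The function `|d_τ|`, which is `2π/τ`-periodic, on the circle `ℝ/(2π/τ)ℤ`. -/
def normDtau (τ : ℝ) (θ : AddCircle (2 * Real.pi / τ)) : ℝ := ‖(fourier 1 θ : ℂ) - 1‖ / τ

/-- The modulation `⟨d_τ(σ - k²)⟩` of the phase-space point `(k, σ)`. -/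
def modulation (τ : ℝ) (x : ℤ × AddCircle (2 * Real.pi / τ)) : ℝ :=
  jbr (normDtau τ (parabolaOffset x))

/-- The frequencies `|k| ≤ τ^{-1/2}` kept by the cutoff `Π_τ`. -/
def cutoffModes (τ : ℝ) : Finset ℤ :=
  Finset.Icc (-⌊τ ^ (-(1 : ℝ) / 2)⌋) ⌊τ ^ (-(1 : ℝ) / 2)⌋

/-- The exponent `m` of the dyadic interval `[2^m, 2^(m+1))` containing the modulation. -/
def modulationLevel (τ : ℝ) (x : ℤ × AddCircle (2 * Real.pi / τ)) : ℕ :=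
  Nat.log 2 ⌊modulation τ x⌋₊

/-- The points of the cutoff region `|k| ≤ τ^{-1/2}` with modulation in `[2^m, 2^(m+1))`. -/
def modulationBlock (τ : ℝ) (m : ℕ) : Set (ℤ × AddCircle (2 * Real.pi / τ)) :=
  {x | x.1 ∈ cutoffModes τ ∧ modulationLevel τ x = m}

variable {τ : ℝ}

lemma mem_cutoffModes {k : ℤ} : k ∈ cutoffModes τ ↔ |(k : ℝ)| ≤ τ ^ (-(1 : ℝ) / 2) := by
  rw [cutoffModes, Finset.mem_Icc, ← abs_le, Int.le_floor, Int.cast_abs]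

lemma continuous_normDtau : Continuous (normDtau τ) := by
  unfold normDtau
  fun_prop

lemma one_le_modulation (x : ℤ × AddCircle (2 * Real.pi / τ)) : 1 ≤ modulation τ x := one_le_jbr _

lemma modulation_pos (x : ℤ × AddCircle (2 * Real.pi / τ)) : 0 < modulation τ x := jbr_pos _

lemma two_pow_modulationLevel_le (x : ℤ × AddCircle (2 * Real.pi / τ)) :
    (2 : ℝ) ^ modulationLevel τ x ≤ modulation τ x := by
  have hne : ⌊modulation τ x⌋₊ ≠ 0 :=
    (Nat.floor_pos.2 (one_le_modulation x)).ne'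
  calc (2 : ℝ) ^ modulationLevel τ x ≤ ⌊modulation τ x⌋₊ := by
        exact_mod_cast Nat.pow_log_le_self 2 hne
    _ ≤ modulation τ x := Nat.floor_le (modulation_pos x).le

lemma modulation_lt_two_pow (x : ℤ × AddCircle (2 * Real.pi / τ)) :
    modulation τ x < 2 ^ (modulationLevel τ x + 1) := by
  have h := Nat.lt_pow_succ_log_self one_lt_two ⌊modulation τ x⌋₊
  rw [Nat.floor_lt (modulation_pos x).le] at h
  exact_mod_cast h

section

variable [hτ : Fact (0 < τ)]

instance fact_period_pos : Fact (0 < 2 * Real.pi / τ) :=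
  ⟨div_pos (by positivity) hτ.out⟩

lemma normDtau_coe (σ : ℝ) : normDtau τ (σ : AddCircle (2 * Real.pi / τ)) = ‖dtau τ σ‖ := by
  rw [normDtau, dtau, fourier_coe_eq_exp hτ.out.ne', norm_div]
  simp [abs_of_pos hτ.out]

-- Jordan's inequality, as `|d_τ(σ)| = (2/τ)|sin(τσ/2)|`.
lemma norm_le_normDtau (θ : AddCircle (2 * Real.pi / τ)) :
    ‖θ‖ ≤ Real.pi / 2 * normDtau τ θ := by
  have hpos := hτ.out
  obtain ⟨σ, hσ, rfl⟩ : ∃ σ : ℝ, |σ| ≤ Real.pi / τ ∧ (σ : AddCircle (2 * Real.pi / τ)) = θ := by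
    obtain ⟨σ, hσ, hσθ⟩ := (AddCircle.coe_image_Icc_eq (2 * Real.pi / τ) (-(Real.pi / τ))).ge
      (Set.mem_univ θ)
    exact ⟨σ, abs_le.2 ⟨hσ.1, hσ.2.trans_eq (by ring)⟩, hσθ⟩
  have hsmall : |τ * σ / 2| ≤ Real.pi / 2 := by
    rw [abs_div, abs_mul, abs_of_pos hpos, abs_two]
    gcongr
    exact (le_div_iff₀' hpos).1 hσ
  have hdtau : normDtau τ (σ : AddCircle (2 * Real.pi / τ)) = 2 * |Real.sin (τ * σ / 2)| / τ := by
    rw [normDtau_coe, dtau, norm_div, mul_assoc, ← Complex.ofReal_mul,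
      Complex.norm_exp_I_mul_ofReal_sub_one, norm_mul, Real.norm_ofNat, Real.norm_eq_abs,
      Complex.norm_of_nonneg hpos.le]
  calc ‖(σ : AddCircle (2 * Real.pi / τ))‖ ≤ |σ| := QuotientAddGroup.norm_mk_le_norm
    _ = Real.pi / 2 * (2 * (2 / Real.pi * |τ * σ / 2|) / τ) := by
        rw [abs_div, abs_mul, abs_of_pos hpos, abs_two]
        field_simp
    _ ≤ Real.pi / 2 * (2 * |Real.sin (τ * σ / 2)| / τ) := by
        gcongr
        exact Real.mul_abs_le_abs_sin hsmall
    _ = Real.pi / 2 * normDtau τ (σ : AddCircle (2 * Real.pi / τ)) := by rw [hdtau]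

lemma measurable_modulation : Measurable (modulation τ) :=
  (continuous_jbr.comp continuous_normDtau).measurable.comp measurable_parabolaOffset

lemma measurableSet_modulationBlock (m : ℕ) : MeasurableSet (modulationBlock τ m) := by
  have hlevel : Measurable (modulationLevel τ) :=
    (measurable_of_countable (Nat.log 2)).comp (Nat.measurable_floor.comp measurable_modulation)
  exact (measurable_fst (MeasurableSet.of_discrete (s := {k : ℤ | k ∈ cutoffModes τ}))).inter
    (hlevel (measurableSet_singleton m))

lemma sq_le_of_mem_cutoffModes {k : ℤ} (hk : k ∈ cutoffModes τ) :
    (k : ℝ) ^ 2 ≤ 2 * Real.pi / τ / 4 := by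
  have hsq : (τ ^ (-(1 : ℝ) / 2)) ^ 2 = 1 / τ := by
    rw [← Real.rpow_natCast, ← Real.rpow_mul hτ.out.le]
    norm_num [Real.rpow_neg_one]
  calc (k : ℝ) ^ 2 = |(k : ℝ)| ^ 2 := (sq_abs _).symm
    _ ≤ (τ ^ (-(1 : ℝ) / 2)) ^ 2 := by gcongr; exact mem_cutoffModes.1 hk
    _ = 1 / τ := hsq
    _ ≤ Real.pi / 2 / τ := by
        have := hτ.out
        gcongr
        linarith [Real.two_le_pi]
    _ = 2 * Real.pi / τ / 4 := by ring

lemma norm_parabolaOffset_le_of_mem_modulationBlock {m : ℕ}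
    {x : ℤ × AddCircle (2 * Real.pi / τ)} (hx : x ∈ modulationBlock τ m) :
    ‖parabolaOffset x‖ ≤ Real.pi * 2 ^ m := by
  have hlt : normDtau τ (parabolaOffset x) ≤ 2 ^ (m + 1) :=
    (le_jbr _).trans (hx.2 ▸ modulation_lt_two_pow x).le
  calc ‖parabolaOffset x‖ ≤ Real.pi / 2 * normDtau τ (parabolaOffset x) := norm_le_normDtau _
    _ ≤ Real.pi / 2 * 2 ^ (m + 1) := by gcongr
    _ = Real.pi * 2 ^ m := by ring

lemma modulationBlock_pairs_subset_nearParabolaPairs (m n : ℕ)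
    (x : ℤ × AddCircle (2 * Real.pi / τ)) :
    {y | y ∈ modulationBlock τ m ∧ -y + x ∈ modulationBlock τ n}
      ⊆ nearParabolaPairs (Real.pi * 2 ^ m) (Real.pi * 2 ^ n) x :=
  fun _ ⟨hy, hxy⟩ ↦
    ⟨⟨sq_le_of_mem_cutoffModes hy.1, norm_parabolaOffset_le_of_mem_modulationBlock hy⟩,
      sq_le_of_mem_cutoffModes hxy.1, norm_parabolaOffset_le_of_mem_modulationBlock hxy⟩

end

end Modulation

section Bilinear

lemma sqrt_add_two_mul_min_le (m n : ℕ) :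
    (√(4 * (Real.pi * 2 ^ m + Real.pi * 2 ^ n)) + 2)
        * (2 * min (Real.pi * 2 ^ m) (Real.pi * 2 ^ n))
      ≤ 64 * (2 ^ min m n * √2 ^ max m n) := by
  have hmin : min (Real.pi * 2 ^ m) (Real.pi * 2 ^ n) = Real.pi * 2 ^ min m n := by
    rw [← mul_min_of_nonneg _ _ Real.pi_pos.le,
      (pow_right_mono₀ (one_le_two (α := ℝ))).map_min]
  have hsqrt : √(4 * (Real.pi * 2 ^ m + Real.pi * 2 ^ n)) ≤ 6 * √2 ^ max m n := by
    refine Real.sqrt_le_iff.2 ⟨by positivity, ?_⟩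
    rw [mul_pow, ← pow_mul, mul_comm (max m n), pow_mul, Real.sq_sqrt zero_le_two]
    calc 4 * (Real.pi * 2 ^ m + Real.pi * 2 ^ n)
        ≤ 4 * (Real.pi * 2 ^ max m n + Real.pi * 2 ^ max m n) := by
          gcongr <;> simp
      _ = 8 * Real.pi * 2 ^ max m n := by ring
      _ ≤ 6 ^ 2 * 2 ^ max m n := by
          gcongr
          linarith [Real.pi_lt_d2]
  have hone : 1 ≤ √2 ^ max m n := one_le_pow₀ (Real.one_le_sqrt.2 one_le_two)
  calc (√(4 * (Real.pi * 2 ^ m + Real.pi * 2 ^ n)) + 2)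
        * (2 * min (Real.pi * 2 ^ m) (Real.pi * 2 ^ n))
      ≤ (8 * √2 ^ max m n) * (2 * (4 * 2 ^ min m n)) := by
        rw [hmin]
        gcongr
        · linarith
        · exact Real.pi_le_four
    _ = 64 * (2 ^ min m n * √2 ^ max m n) := by ring

/-- The number `2^{1/8}`: blocks of levels `m` and `n` interact with strength
`(2^{1/8})^{-|m-n|}` relative to the weights `2^{3m/8}` and `2^{3n/8}`. -/
def dyadicRoot : ℝ≥0∞ := ENNReal.ofReal (2 ^ (1 / 8 : ℝ))

/-- The constant of the bilinear convolution estimate. -/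
def bilinearConst : ℝ≥0∞ := 8 * (2 * (1 - dyadicRoot⁻¹)⁻¹)

lemma dyadicRoot_ne_zero : dyadicRoot ≠ 0 :=
  (ENNReal.ofReal_pos.2 (by positivity)).ne'

lemma dyadicRoot_ne_top : dyadicRoot ≠ ⊤ := ENNReal.ofReal_ne_top

lemma one_lt_dyadicRoot : 1 < dyadicRoot := by
  rw [dyadicRoot, ENNReal.one_lt_ofReal]
  exact Real.one_lt_rpow one_lt_two (by norm_num)

lemma bilinearConst_ne_top : bilinearConst ≠ ⊤ := by
  have hne : 1 - dyadicRoot⁻¹ ≠ 0 :=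
    (tsub_pos_of_lt (ENNReal.inv_lt_one.2 one_lt_dyadicRoot)).ne'
  unfold bilinearConst
  finiteness

lemma dyadicRoot_pow (m : ℕ) : dyadicRoot ^ m = ENNReal.ofReal (2 ^ (m / 8 : ℝ)) := by
  rw [dyadicRoot, ← ENNReal.ofReal_pow (by positivity), ← Real.rpow_mul_natCast zero_le_two]
  congr 2
  ring

lemma block_interaction_eq (m n : ℕ) :
    (8 * dyadicRoot⁻¹ ^ Nat.dist m n * (dyadicRoot ^ (3 * m) * dyadicRoot ^ (3 * n))) ^ 2
      = ENNReal.ofReal (64 * (2 ^ min m n * √2 ^ max m n)) := by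
  have hexp : 3 * m + 3 * n = Nat.dist m n + (4 * min m n + 2 * max m n) := by
    simp only [Nat.dist]
    lia
  have hcancel : dyadicRoot⁻¹ ^ Nat.dist m n * (dyadicRoot ^ (3 * m) * dyadicRoot ^ (3 * n))
      = dyadicRoot ^ (4 * min m n + 2 * max m n) := by
    rw [← pow_add, hexp, pow_add, ← mul_assoc, ← mul_pow,
      ENNReal.inv_mul_cancel dyadicRoot_ne_zero dyadicRoot_ne_top, one_pow, one_mul]
  have hpow : dyadicRoot ^ 8 = ENNReal.ofReal 2 := by rw [dyadicRoot_pow]; norm_num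
  have hsqrt : dyadicRoot ^ 4 = ENNReal.ofReal √2 := by
    rw [dyadicRoot_pow, Real.sqrt_eq_rpow]; norm_num
  rw [mul_assoc, hcancel]
  calc (8 * dyadicRoot ^ (4 * min m n + 2 * max m n)) ^ 2
      = 64 * ((dyadicRoot ^ 8) ^ min m n * (dyadicRoot ^ 4) ^ max m n) := by ring
    _ = ENNReal.ofReal (64 * (2 ^ min m n * √2 ^ max m n)) := by
        rw [hpow, hsqrt, ENNReal.ofReal_mul (by positivity), ENNReal.ofReal_mul (by positivity),
          ENNReal.ofReal_pow zero_le_two, ENNReal.ofReal_pow (by positivity),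
          ENNReal.ofReal_ofNat 64]

variable {τ : ℝ}

/-- The weight `⟨d_τ(σ - k²)⟩^b` of the discrete Bourgain space. -/
def modulationWeight (τ b : ℝ) (x : ℤ × AddCircle (2 * Real.pi / τ)) : ℝ≥0∞ :=
  ENNReal.ofReal (modulation τ x ^ b)

/-- The weighted norm `‖⟨d_τ(σ - k²)⟩^b f‖_{L²}` on phase space. -/
def modulationNorm (τ b : ℝ) [Fact (0 < τ)]
    (f : ℤ × AddCircle (2 * Real.pi / τ) → ℝ≥0∞) : ℝ≥0∞ :=
  eLpNorm (fun x ↦ modulationWeight τ b x * f x) 2 (phaseMeasure (2 * Real.pi / τ))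

lemma dyadicRoot_pow_le_modulationWeight {m : ℕ} {x : ℤ × AddCircle (2 * Real.pi / τ)}
    (hx : x ∈ modulationBlock τ m) :
    dyadicRoot ^ (3 * m) ≤ modulationWeight τ (3 / 8) x := by
  rw [dyadicRoot_pow, modulationWeight]
  refine ENNReal.ofReal_le_ofReal ?_
  calc (2 : ℝ) ^ ((3 * m : ℕ) / 8 : ℝ) = ((2 : ℝ) ^ m) ^ (3 / 8 : ℝ) := by
        rw [← Real.rpow_natCast_mul zero_le_two]
        congr 1
        push_cast
        ring
    _ ≤ modulation τ x ^ (3 / 8 : ℝ) := by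
        gcongr
        exact hx.2 ▸ two_pow_modulationLevel_le x

lemma phaseMeasure_modulationBlock_pairs_le [Fact (0 < τ)] (m n : ℕ)
    (x : ℤ × AddCircle (2 * Real.pi / τ)) :
    phaseMeasure (2 * Real.pi / τ)
        {y | y ∈ modulationBlock τ m ∧ -y + x ∈ modulationBlock τ n}
      ≤ (8 * dyadicRoot⁻¹ ^ Nat.dist m n
        * (dyadicRoot ^ (3 * m) * dyadicRoot ^ (3 * n))) ^ 2 := by
  rw [block_interaction_eq]
  exact ((measure_mono (modulationBlock_pairs_subset_nearParabolaPairs m n x)).trans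
    (phaseMeasure_nearParabolaPairs_le _ _ x)).trans
      (ENNReal.ofReal_le_ofReal (sqrt_add_two_mul_min_le m n))

theorem eLpNorm_lconvolution_le_modulationNorm [Fact (0 < τ)]
    {f g : ℤ × AddCircle (2 * Real.pi / τ) → ℝ≥0∞} (hf : Measurable f) (hg : Measurable g)
    (hf_cut : ∀ x, x.1 ∉ cutoffModes τ → f x = 0) (hg_cut : ∀ x, x.1 ∉ cutoffModes τ → g x = 0) :
    eLpNorm (f ⋆ₗ[phaseMeasure (2 * Real.pi / τ)] g) 2 (phaseMeasure (2 * Real.pi / τ))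
      ≤ bilinearConst * (modulationNorm τ (3 / 8) f * modulationNorm τ (3 / 8) g) := by
  have hdisj : Pairwise (Function.onFun Disjoint (modulationBlock τ)) := fun m n hmn ↦
    Set.disjoint_left.2 fun x hm hn ↦ hmn (hm.2.symm.trans hn.2)
  have hsupport {h : ℤ × AddCircle (2 * Real.pi / τ) → ℝ≥0∞}
      (h_cut : ∀ x, x.1 ∉ cutoffModes τ → h x = 0) :
      Function.support h ⊆ ⋃ m, modulationBlock τ m := fun x hx ↦
    Set.mem_iUnion.2
      ⟨modulationLevel τ x, by_contra fun hmem ↦ hx (h_cut x fun hk ↦ hmem ⟨hk, rfl⟩)⟩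
  have hrow (m : ℕ) : ∑' n, 8 * dyadicRoot⁻¹ ^ Nat.dist m n ≤ bilinearConst := by
    rw [ENNReal.tsum_mul_left, bilinearConst]
    gcongr
    exact tsum_pow_dist_le _ m
  exact eLpNorm_lconvolution_le_of_blocks measurableSet_modulationBlock hdisj
    phaseMeasure_modulationBlock_pairs_le hrow (fun n ↦ by simpa only [Nat.dist_comm] using hrow n)
    (fun m x hx ↦ dyadicRoot_pow_le_modulationWeight hx) hf hg (hsupport hf_cut) (hsupport hg_cut)

end Bilinear

section FourierPolynomials

variable {T : ℝ} [hT : Fact (0 < T)]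

lemma integrable_haarAddCircle_of_continuous {f : AddCircle T → ℂ} (hf : Continuous f) :
    Integrable f haarAddCircle :=
  hf.integrable_of_hasCompactSupport (HasCompactSupport.of_compactSpace f)

lemma integral_fourier (n : ℤ) :
    ∫ t : AddCircle T, (fourier n t : ℂ) = if n = 0 then (T : ℂ) else 0 := by
  have hcoeff : ∫ t : AddCircle T, (fourier n t : ℂ) ∂haarAddCircle
      = fourierCoeff (fourier n : AddCircle T → ℂ) 0 := by
    simp only [fourierCoeff, neg_zero, fourier_zero, one_smul]
  rw [AddCircle.volume_eq_smul_haarAddCircle, integral_smul_measure, hcoeff, fourierCoeff_fourier,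
    ENNReal.toReal_ofReal hT.out.le, Pi.single_apply]
  simp [eq_comm]

lemma integral_fourier_mul_fourier_neg_add (m n : ℤ) (θ : AddCircle T) :
    ∫ t : AddCircle T, (fourier m t : ℂ) * fourier n (-t + θ)
      = if m = n then T * (fourier n θ : ℂ) else 0 := by
  have hsplit (t : AddCircle T) :
      (fourier m t : ℂ) * fourier n (-t + θ) = fourier n θ * fourier (m - n) t := by
    simp only [fourier_apply, sub_eq_add_neg m, add_smul, smul_add, smul_neg, neg_smul,
      AddCircle.toCircle_add, Circle.coe_mul]
    ring
  simp only [hsplit, integral_const_mul, integral_fourier, sub_eq_zero]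
  split_ifs <;> ring

lemma integral_sum_fourier_mul_sum_fourier (a b : ℤ → ℂ) (M : Finset ℤ) (θ : AddCircle T) :
    ∫ t : AddCircle T, (∑ m ∈ M, a m * fourier m t) * ∑ n ∈ M, b n * fourier n (-t + θ)
      = T * ∑ m ∈ M, a m * b m * fourier m θ := by
  have hint (m n : ℤ) : Integrable fun t : AddCircle T ↦
      a m * b n * ((fourier m t : ℂ) * fourier n (-t + θ)) :=
    (by fun_prop : Continuous _).integrable_of_hasCompactSupport (.of_compactSpace _)
  simp only [Finset.sum_mul_sum, mul_mul_mul_comm (a _)]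
  rw [integral_finsetSum _ fun m _ ↦ integrable_finsetSum _ fun n _ ↦ hint m n, Finset.mul_sum]
  refine Finset.sum_congr rfl fun m hm ↦ ?_
  rw [integral_finsetSum _ fun n _ ↦ hint m n]
  simp only [integral_const_mul, integral_fourier_mul_fourier_neg_add, mul_ite, mul_zero,
    Finset.sum_ite_eq, if_pos hm]
  ring

lemma fourierCoeff_fourier_mul (g : AddCircle T → ℂ) (l k : ℤ) :
    fourierCoeff (fun x ↦ fourier l x * g x) k = fourierCoeff g (k - l) := by
  simp only [fourierCoeff, smul_eq_mul, ← mul_assoc, ← fourier_add, neg_sub', sub_neg_eq_add]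

lemma fourierCoeff_sum_fourier_mul {g : AddCircle T → ℂ} (hg : Continuous g) (c : ℤ → ℂ)
    (A : Finset ℤ) (k : ℤ) :
    fourierCoeff (fun x ↦ (∑ l ∈ A, c l * fourier l x) * g x) k
      = ∑ l ∈ A, c l * fourierCoeff g (k - l) := by
  have hsum : (fun x ↦ (∑ l ∈ A, c l * fourier l x) * g x)
      = ∑ l ∈ A, fun x ↦ c l * (fourier l x * g x) := by
    ext x
    simp only [Finset.sum_mul, Finset.sum_apply, mul_assoc]
  rw [hsum, fourierCoeff.sum _ _ fun l _ ↦ integrable_haarAddCircle_of_continuous (by fun_prop),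
    Finset.sum_apply]
  simp only [fourierCoeff.const_mul, fourierCoeff_fourier_mul]

end FourierPolynomials

section Cutoff

variable {τ : ℝ} (f : Torus → ℂ)

lemma projC_eq_sum (x : Torus) :
    projC τ f x = ∑ k ∈ cutoffModes τ, fourierCoeff f k * fourier k x := by
  simp only [projC, ← mem_cutoffModes]
  rw [tsum_eq_sum (s := cutoffModes τ) fun k hk ↦ if_neg hk]
  exact Finset.sum_congr rfl fun k hk ↦ if_pos hk

lemma continuous_projC : Continuous (projC τ f) := by
  rw [funext (projC_eq_sum f)]
  fun_prop

lemma fourierCoeff_projC (k : ℤ) :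
    fourierCoeff (projC τ f) k = if k ∈ cutoffModes τ then fourierCoeff f k else 0 := by
  have hmul := fourierCoeff_sum_fourier_mul (g := fun _ : Torus ↦ 1) continuous_const
    (fourierCoeff f) (cutoffModes τ) k
  have hone : (fun _ : Torus ↦ (1 : ℂ)) = fourier 0 := by ext; simp
  simp only [← projC_eq_sum, mul_one] at hmul
  simpa only [hone, fourierCoeff_fourier, Pi.single_apply, sub_eq_zero, mul_ite, mul_one,
    mul_zero, Finset.sum_ite_eq] using hmul

lemma fourierCoeff_projC_mul {g : Torus → ℂ} (hg : Continuous g) (k : ℤ) :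
    fourierCoeff (fun x ↦ projC τ f x * g x) k
      = ∑ l ∈ cutoffModes τ, fourierCoeff (projC τ f) l * fourierCoeff g (k - l) := by
  conv_lhs => simp only [projC_eq_sum]
  rw [fourierCoeff_sum_fourier_mul hg]
  exact Finset.sum_congr rfl fun l hl ↦ by rw [fourierCoeff_projC, if_pos hl]

lemma projC_zero : projC τ 0 = 0 := by
  ext x
  simp [projC, fourierCoeff]

end Cutoff

section SpaceTimeFT

/-- The transform `ũ(σ, k) = τ ∑ₘ û_m(k) e^{imτσ}` of a sequence of functions on the torus. As it
is `2π/τ`-periodic in `σ`, the variable `σ` is taken on the circle `ℝ/(2π/τ)ℤ`. -/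
def spaceTimeFT (τ : ℝ) (u : ℤ → Torus → ℂ) (x : ℤ × AddCircle (2 * Real.pi / τ)) : ℂ :=
  τ * ∑' m : ℤ, fourierCoeff (u m) x.1 * fourier m x.2

variable {τ : ℝ} {u v : ℤ → Torus → ℂ}

lemma spaceTimeFT_eq_sum {M : Finset ℤ} (hM : Function.support u ⊆ M)
    (x : ℤ × AddCircle (2 * Real.pi / τ)) :
    spaceTimeFT τ u x = τ * ∑ m ∈ M, fourierCoeff (u m) x.1 * fourier m x.2 := by
  rw [spaceTimeFT, tsum_eq_sum (s := M) fun m hm ↦ ?_]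
  rw [Function.notMem_support.1 fun h ↦ hm (hM h)]
  simp [fourierCoeff]

lemma continuous_spaceTimeFT (hu : (Function.support u).Finite) (k : ℤ) :
    Continuous fun θ : AddCircle (2 * Real.pi / τ) ↦ spaceTimeFT τ u (k, θ) := by
  simp only [spaceTimeFT_eq_sum hu.coe_toFinset.ge]
  fun_prop

lemma spaceTimeFT_projC (u : ℤ → Torus → ℂ) (x : ℤ × AddCircle (2 * Real.pi / τ)) :
    spaceTimeFT τ (fun n ↦ projC τ (u n)) x
      = if x.1 ∈ cutoffModes τ then spaceTimeFT τ u x else 0 := by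
  simp only [spaceTimeFT, fourierCoeff_projC]
  split_ifs <;> simp

lemma enorm_spaceTimeFT_projC_le (u : ℤ → Torus → ℂ) (x : ℤ × AddCircle (2 * Real.pi / τ)) :
    ‖spaceTimeFT τ (fun n ↦ projC τ (u n)) x‖ₑ ≤ ‖spaceTimeFT τ u x‖ₑ := by
  rw [spaceTimeFT_projC]
  split_ifs <;> simp

lemma finite_support_projC (hu : (Function.support u).Finite) :
    (Function.support fun n ↦ projC τ (u n)).Finite :=
  hu.subset <| Function.support_comp_subset projC_zero u

lemma measurable_spaceTimeFT (hu : (Function.support u).Finite) : Measurable (spaceTimeFT τ u) :=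
  measurable_from_prod_countable_right fun k ↦ (continuous_spaceTimeFT hu k).measurable

variable [hτ : Fact (0 < τ)]

lemma enorm_sum_mul_fourier_le_lintegral (a b : ℤ → ℂ) (M : Finset ℤ)
    (θ : AddCircle (2 * Real.pi / τ)) :
    ‖(τ : ℂ) * ∑ m ∈ M, a m * b m * fourier m θ‖ₑ
      ≤ ∫⁻ t : AddCircle (2 * Real.pi / τ), ‖(τ : ℂ) * ∑ m ∈ M, a m * fourier m t‖ₑ
        * ‖(τ : ℂ) * ∑ m ∈ M, b m * fourier m (-t + θ)‖ₑ := by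
  have hτ₀ : (τ : ℂ) ≠ 0 := mod_cast hτ.out.ne'
  have hpi : 1 ≤ ‖(2 * Real.pi : ℂ)‖ₑ := by
    rw [← ofReal_norm, ← ENNReal.ofReal_one, norm_mul, Complex.norm_ofNat, Complex.norm_real,
      Real.norm_of_nonneg Real.pi_pos.le]
    exact ENNReal.ofReal_le_ofReal (by linarith [Real.pi_gt_three])
  have hconv : (2 * Real.pi : ℂ) * (τ * ∑ m ∈ M, a m * b m * fourier m θ)
      = ∫ t : AddCircle (2 * Real.pi / τ), (τ * ∑ m ∈ M, a m * fourier m t)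
        * (τ * ∑ m ∈ M, b m * fourier m (-t + θ)) := by
    simp only [mul_mul_mul_comm (τ : ℂ), integral_const_mul,
      integral_sum_fourier_mul_sum_fourier]
    push_cast
    field_simp
  calc ‖(τ : ℂ) * ∑ m ∈ M, a m * b m * fourier m θ‖ₑ
      ≤ ‖(2 * Real.pi : ℂ) * (τ * ∑ m ∈ M, a m * b m * fourier m θ)‖ₑ := by
        rw [enorm_mul (2 * Real.pi : ℂ)]
        exact le_mul_of_one_le_left' hpi
    _ ≤ _ := by
        rw [hconv]
        exact (enorm_integral_le_lintegral_enorm _).trans_eq (by simp only [enorm_mul])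

lemma enorm_spaceTimeFT_projC_mul_le (hu : (Function.support u).Finite)
    (hv : (Function.support v).Finite) (hv_cont : ∀ n, Continuous (v n))
    (x : ℤ × AddCircle (2 * Real.pi / τ)) :
    ‖spaceTimeFT τ (fun n y ↦ projC τ (u n) y * v n y) x‖ₑ
      ≤ ((fun y ↦ ‖spaceTimeFT τ (fun n ↦ projC τ (u n)) y‖ₑ)
          ⋆ₗ[phaseMeasure (2 * Real.pi / τ)] fun y ↦ ‖spaceTimeFT τ v y‖ₑ) x := by
  have hpu := finite_support_projC (τ := τ) hu
  have hu_meas := measurable_spaceTimeFT (τ := τ) hpu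
  have hv_meas := measurable_spaceTimeFT (τ := τ) hv
  set M := hpu.toFinset ∪ hv.toFinset with hM
  have huM : (Function.support fun n ↦ projC τ (u n)) ⊆ M := by simp [hM]
  have hvM : Function.support v ⊆ M := by simp [hM]
  have huvM : (Function.support fun n y ↦ projC τ (u n) y * v n y) ⊆ M :=
    (Function.support_mul_subset_right _ v).trans hvM
  have hexpand : spaceTimeFT τ (fun n y ↦ projC τ (u n) y * v n y) x
      = ∑ l ∈ cutoffModes τ, (τ : ℂ) * ∑ m ∈ M,
        fourierCoeff (projC τ (u m)) l * fourierCoeff (v m) (x.1 - l) * fourier m x.2 := by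
    simp only [spaceTimeFT_eq_sum huvM, fourierCoeff_projC_mul _ (hv_cont _), Finset.sum_mul]
    rw [Finset.sum_comm, Finset.mul_sum]
  rw [hexpand, lconvolution_def, lintegral_prod _ (by fun_prop), lintegral_count]
  refine (enorm_sum_le _ _).trans (le_trans ?_ (ENNReal.sum_le_tsum (cutoffModes τ)))
  refine Finset.sum_le_sum fun l _ ↦
    (enorm_sum_mul_fourier_le_lintegral _ _ M x.2).trans_eq ?_
  simp only [spaceTimeFT_eq_sum huM, spaceTimeFT_eq_sum hvM, Prod.fst_add, Prod.fst_neg,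
    Prod.snd_add, Prod.snd_neg, neg_add_eq_sub l]

end SpaceTimeFT

section BourgainNorm

/-- The Sobolev weight `⟨k⟩^s` on phase space. -/
def sobolevWeight {T : ℝ} (s : ℝ) (x : ℤ × AddCircle T) : ℝ≥0∞ := ENNReal.ofReal (jbr x.1 ^ s)

/-- The integrand `⟨k⟩^{2s} ⟨d_τ(σ - k²)⟩^{2b} |ũ(σ, k)|²` of the squared discrete Bourgain norm. -/
def bourgainDensity (τ s b : ℝ) (u : ℤ → Torus → ℂ) (x : ℤ × AddCircle (2 * Real.pi / τ)) : ℝ :=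
  jbr x.1 ^ (2 * s) * modulation τ x ^ (2 * b) * ‖spaceTimeFT τ u x‖ ^ 2

variable {τ s b : ℝ} {u : ℤ → Torus → ℂ}

lemma XdNorm_nonneg : 0 ≤ XdNorm τ s b u := Real.sqrt_nonneg _

lemma measurable_sobolevWeight {T : ℝ} (s : ℝ) :
    Measurable (sobolevWeight s : ℤ × AddCircle T → ℝ≥0∞) := by
  unfold sobolevWeight
  exact (measurable_of_countable fun k : ℤ ↦ ENNReal.ofReal (jbr k ^ s)).comp measurable_fst

lemma bourgainDensity_nonneg (x : ℤ × AddCircle (2 * Real.pi / τ)) :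
    0 ≤ bourgainDensity τ s b u x := by
  have := jbr_pos x.1
  have := modulation_pos x
  unfold bourgainDensity
  positivity

lemma ofReal_bourgainDensity (x : ℤ × AddCircle (2 * Real.pi / τ)) :
    ENNReal.ofReal (bourgainDensity τ s b u x)
      = (modulationWeight τ b x * (sobolevWeight s x * ‖spaceTimeFT τ u x‖ₑ)) ^ 2 := by
  have hj := jbr_pos x.1
  have hm := modulation_pos x
  rw [modulationWeight, sobolevWeight, ← ofReal_norm, ← ENNReal.ofReal_mul (by positivity),
    ← ENNReal.ofReal_mul (by positivity), ← ENNReal.ofReal_pow (by positivity), bourgainDensity,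
    mul_comm 2 s, mul_comm 2 b, Real.rpow_mul hj.le, Real.rpow_mul hm.le, Real.rpow_two,
    Real.rpow_two]
  ring_nf

lemma continuous_bourgainDensity (hu : (Function.support u).Finite) (k : ℤ) :
    Continuous fun θ : AddCircle (2 * Real.pi / τ) ↦ bourgainDensity τ s b u (k, θ) := by
  have hFT := continuous_spaceTimeFT (τ := τ) hu k
  have hmod : Continuous fun θ : AddCircle (2 * Real.pi / τ) ↦ modulation τ (k, θ) := by
    unfold modulation parabolaOffset
    exact continuous_jbr.comp (continuous_normDtau.comp (by fun_prop))
  have hmod_rpow := hmod.rpow_const (p := 2 * b) fun θ ↦ Or.inl (modulation_pos (k, θ)).ne'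
  exact ((continuous_const (y := jbr k ^ (2 * s))).mul hmod_rpow).mul (hFT.norm.pow 2)

lemma norm_spaceTimeFT_sq_le {M : Finset ℤ} (hM : Function.support u ⊆ M)
    (x : ℤ × AddCircle (2 * Real.pi / τ)) :
    ‖spaceTimeFT τ u x‖ ^ 2 ≤ τ ^ 2 * (M.card * ∑ m ∈ M, ‖fourierCoeff (u m) x.1‖ ^ 2) := by
  rw [spaceTimeFT_eq_sum hM, norm_mul, mul_pow, Complex.norm_real, Real.norm_eq_abs, sq_abs]
  gcongr
  calc ‖∑ m ∈ M, fourierCoeff (u m) x.1 * fourier m x.2‖ ^ 2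
      ≤ (∑ m ∈ M, ‖fourierCoeff (u m) x.1‖) ^ 2 := by
        gcongr
        refine norm_sum_le_of_le _ fun m _ ↦ ?_
        rw [norm_mul, fourier_apply, Circle.norm_coe, mul_one]
    _ ≤ M.card * ∑ m ∈ M, ‖fourierCoeff (u m) x.1‖ ^ 2 := sq_sum_le_card_mul_sum_sq

variable [hτ : Fact (0 < τ)]

lemma exists_modulation_rpow_le (b : ℝ) :
    ∃ B, 0 ≤ B ∧ ∀ x : ℤ × AddCircle (2 * Real.pi / τ), modulation τ x ^ b ≤ B := by
  have hcont : Continuous fun θ : AddCircle (2 * Real.pi / τ) ↦ jbr (normDtau τ θ) ^ b :=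
    (continuous_jbr.comp continuous_normDtau).rpow_const fun θ ↦ Or.inl (jbr_pos _).ne'
  obtain ⟨B, hB⟩ := isCompact_univ.exists_bound_of_continuousOn hcont.continuousOn
  exact ⟨B, (norm_nonneg _).trans (hB 0 trivial), fun x ↦
    (Real.le_norm_self _).trans (hB (parabolaOffset x) trivial)⟩

lemma exists_summable_bound_bourgainDensity (b : ℝ) (hu : (Function.support u).Finite)
    (hs : ∀ m, Summable fun k : ℤ ↦ jbr k ^ (2 * s) * ‖fourierCoeff (u m) k‖ ^ 2) :
    ∃ c : ℤ → ℝ, Summable c ∧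
      ∀ k (θ : AddCircle (2 * Real.pi / τ)), ‖bourgainDensity τ s b u (k, θ)‖ ≤ c k := by
  obtain ⟨B, hB₀, hB⟩ := exists_modulation_rpow_le (τ := τ) (2 * b)
  set M := hu.toFinset
  refine ⟨fun k ↦ B * τ ^ 2 * M.card * ∑ m ∈ M, jbr k ^ (2 * s) * ‖fourierCoeff (u m) k‖ ^ 2,
    (summable_sum fun m _ ↦ hs m).mul_left _, fun k θ ↦ ?_⟩
  have hj := jbr_pos k
  rw [Real.norm_of_nonneg (bourgainDensity_nonneg _)]
  calc bourgainDensity τ s b u (k, θ)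
      ≤ jbr k ^ (2 * s) * B * (τ ^ 2 * (M.card * ∑ m ∈ M, ‖fourierCoeff (u m) k‖ ^ 2)) := by
        unfold bourgainDensity
        gcongr
        · exact hB (k, θ)
        · exact norm_spaceTimeFT_sq_le hu.coe_toFinset.ge (k, θ)
    _ = _ := by
        simp only [← Finset.mul_sum]
        ring

lemma XdNorm_sq : XdNorm τ s b u ^ 2 = ∫ σ in Set.Ioc (-(Real.pi / τ)) (Real.pi / τ),
    ∑' k : ℤ, bourgainDensity τ s b u (k, (σ : AddCircle (2 * Real.pi / τ))) := by
  have hdensity (σ : ℝ) (k : ℤ) : jbr k ^ (2 * s) * jbr ‖dtau τ (σ - (k : ℝ) ^ 2)‖ ^ (2 * b) *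
      ‖(τ : ℂ) * ∑' m : ℤ, fourierCoeff (u m) k * Complex.exp (Complex.I * m * τ * σ)‖ ^ 2
        = bourgainDensity τ s b u (k, (σ : AddCircle (2 * Real.pi / τ))) := by
    simp only [bourgainDensity, modulation, parabolaOffset, spaceTimeFT,
      fourier_coe_eq_exp hτ.out.ne', ← AddCircle.coe_sub, normDtau_coe]
  simp only [XdNorm, hdensity]
  exact Real.sq_sqrt (integral_nonneg fun σ ↦ tsum_nonneg fun k ↦ bourgainDensity_nonneg _)

lemma ofReal_XdNorm_sq (hu : (Function.support u).Finite)
    (hs : ∀ m, Summable fun k : ℤ ↦ jbr k ^ (2 * s) * ‖fourierCoeff (u m) k‖ ^ 2) :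
    ENNReal.ofReal (XdNorm τ s b u) ^ 2
      = ∑' k : ℤ, ∫⁻ θ : AddCircle (2 * Real.pi / τ),
        ENNReal.ofReal (bourgainDensity τ s b u (k, θ)) := by
  obtain ⟨c, hc, hle⟩ := exists_summable_bound_bourgainDensity (τ := τ) b hu hs
  have hcont : Continuous fun θ : AddCircle (2 * Real.pi / τ) ↦
      ∑' k : ℤ, bourgainDensity τ s b u (k, θ) :=
    continuous_tsum (continuous_bourgainDensity hu) hc hle
  have hsum (θ : AddCircle (2 * Real.pi / τ)) :
      Summable fun k : ℤ ↦ bourgainDensity τ s b u (k, θ) :=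
    .of_norm_bounded hc fun k ↦ hle k θ
  have hend : Real.pi / τ = -(Real.pi / τ) + 2 * Real.pi / τ := by ring
  calc ENNReal.ofReal (XdNorm τ s b u) ^ 2
      = ∫⁻ σ in Set.Ioc (-(Real.pi / τ)) (Real.pi / τ), ENNReal.ofReal
          (∑' k : ℤ, bourgainDensity τ s b u (k, (σ : AddCircle (2 * Real.pi / τ)))) := by
        rw [← ENNReal.ofReal_pow XdNorm_nonneg, XdNorm_sq]
        exact ofReal_integral_eq_lintegral_ofReal
          (hcont.comp (AddCircle.continuous_mk' _)).integrableOn_Ioc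
          (.of_forall fun σ ↦ tsum_nonneg fun k ↦ bourgainDensity_nonneg _)
    _ = ∫⁻ θ : AddCircle (2 * Real.pi / τ),
          ENNReal.ofReal (∑' k : ℤ, bourgainDensity τ s b u (k, θ)) := by
        rw [← AddCircle.lintegral_preimage _ (-(Real.pi / τ)), ← hend]
    _ = _ := by
        simp only [ENNReal.ofReal_tsum_of_nonneg (fun _ ↦ bourgainDensity_nonneg _) (hsum _)]
        exact lintegral_tsum fun k ↦
          (continuous_bourgainDensity hu k).measurable.ennreal_ofReal.aemeasurable

lemma measurable_modulationWeight (b : ℝ) : Measurable (modulationWeight τ b) :=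
  (measurable_modulation.pow_const b).ennreal_ofReal

theorem ofReal_XdNorm (hu : (Function.support u).Finite)
    (hs : ∀ m, Summable fun k : ℤ ↦ jbr k ^ (2 * s) * ‖fourierCoeff (u m) k‖ ^ 2) :
    ENNReal.ofReal (XdNorm τ s b u)
      = modulationNorm τ b fun x ↦ sobolevWeight s x * ‖spaceTimeFT τ u x‖ₑ := by
  have hmod := measurable_modulationWeight (τ := τ) b
  have hsob := measurable_sobolevWeight (T := 2 * Real.pi / τ) s
  have hFT := measurable_spaceTimeFT (τ := τ) hu
  refine (ENNReal.pow_right_strictMono two_ne_zero).injective ?_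
  rw [ofReal_XdNorm_sq hu hs, modulationNorm, eLpNorm_two_sq, lintegral_prod _ (by fun_prop),
    lintegral_count]
  simp only [ofReal_bourgainDensity]

end BourgainNorm

section Trilinear

lemma jbr_add_le (x y : ℝ) : jbr (x + y) ≤ 2 * (jbr x * jbr y) := by
  have hmul : jbr x * jbr y = √((1 + x ^ 2) * (1 + y ^ 2)) := by
    rw [jbr, jbr, Real.sqrt_mul (by positivity)]
  rw [hmul, jbr, Real.sqrt_le_left (by positivity), mul_pow, Real.sq_sqrt (by positivity)]
  nlinarith [sq_nonneg (x - y), sq_nonneg (x * y), sq_nonneg x, sq_nonneg y]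

lemma sobolevWeight_add_le {T s : ℝ} (hs : 0 ≤ s) (x y : ℤ × AddCircle T) :
    sobolevWeight s (x + y)
      ≤ ENNReal.ofReal (2 ^ s) * (sobolevWeight s x * sobolevWeight s y) := by
  have hx := jbr_pos x.1
  have hy := jbr_pos y.1
  simp only [sobolevWeight, Prod.fst_add, Int.cast_add]
  rw [← ENNReal.ofReal_mul (by positivity), ← ENNReal.ofReal_mul (by positivity),
    ← Real.mul_rpow hx.le hy.le, ← Real.mul_rpow zero_le_two (by positivity)]
  exact ENNReal.ofReal_le_ofReal
    (Real.rpow_le_rpow (jbr_pos _).le (jbr_add_le _ _) hs)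

lemma modulationWeight_mul_neg {τ : ℝ} (b : ℝ) (x : ℤ × AddCircle (2 * Real.pi / τ)) :
    modulationWeight τ b x * modulationWeight τ (-b) x = 1 := by
  have hm := modulation_pos x
  rw [modulationWeight, modulationWeight, ← ENNReal.ofReal_mul (by positivity),
    ← Real.rpow_add hm, add_neg_cancel, Real.rpow_zero, ENNReal.ofReal_one]

/-- The size `⟨k⟩^s |(Π_τ u)~(σ, k)|` on phase space of the frequency-localized sequence
`(Π_τ u_n)`. -/
def cutoffProfile (τ s : ℝ) (u : ℤ → Torus → ℂ) (x : ℤ × AddCircle (2 * Real.pi / τ)) : ℝ≥0∞ :=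
  sobolevWeight s x * ‖spaceTimeFT τ (fun n ↦ projC τ (u n)) x‖ₑ

variable {τ s : ℝ} {u v w : ℤ → Torus → ℂ}

lemma cutoffProfile_eq_zero {x : ℤ × AddCircle (2 * Real.pi / τ)} (hx : x.1 ∉ cutoffModes τ) :
    cutoffProfile τ s u x = 0 := by
  rw [cutoffProfile, spaceTimeFT_projC, if_neg hx, enorm_zero, mul_zero]

lemma measurable_cutoffProfile (hu : (Function.support u).Finite) :
    Measurable (cutoffProfile τ s u) :=
  (measurable_sobolevWeight s).mul (measurable_spaceTimeFT (finite_support_projC hu)).enorm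

variable [hτ : Fact (0 < τ)]

lemma ofReal_XdNorm_projC (b : ℝ) (hu : (Function.support u).Finite) :
    ENNReal.ofReal (XdNorm τ s b fun n ↦ projC τ (u n))
      = modulationNorm τ b (cutoffProfile τ s u) :=
  ofReal_XdNorm (finite_support_projC hu) fun m ↦
    summable_of_ne_finset_zero (s := cutoffModes τ) fun k hk ↦ by
      simp [fourierCoeff_projC, hk]

lemma modulationNorm_cutoffProfile_le (b : ℝ) (hu : (Function.support u).Finite)
    (hs : ∀ m, Summable fun k : ℤ ↦ jbr k ^ (2 * s) * ‖fourierCoeff (u m) k‖ ^ 2) :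
    modulationNorm τ b (cutoffProfile τ s u) ≤ ENNReal.ofReal (XdNorm τ s b u) := by
  rw [ofReal_XdNorm hu hs]
  refine eLpNorm_mono_enorm fun x ↦ ?_
  simp only [enorm_eq_self, cutoffProfile]
  gcongr
  exact enorm_spaceTimeFT_projC_le u x

lemma cutoffProfile_mul_mul_le (hs : 0 ≤ s) (hu : (Function.support u).Finite)
    (hv : (Function.support v).Finite) (hw : (Function.support w).Finite)
    (x : ℤ × AddCircle (2 * Real.pi / τ)) :
    cutoffProfile τ s (fun n y ↦ projC τ (u n) y * projC τ (v n) y * projC τ (w n) y) x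
      ≤ ENNReal.ofReal (2 ^ s) ^ 2 * (cutoffProfile τ s u ⋆ₗ[phaseMeasure (2 * Real.pi / τ)]
        (cutoffProfile τ s v ⋆ₗ[phaseMeasure (2 * Real.pi / τ)] cutoffProfile τ s w)) x := by
  have hpw := finite_support_projC (τ := τ) hw
  have hvw : (Function.support fun n y ↦ projC τ (v n) y * projC τ (w n) y).Finite :=
    hpw.subset (Function.support_mul_subset_right _ _)
  have hmeas {f : ℤ → Torus → ℂ} (hf : (Function.support f).Finite) :=
    (measurable_spaceTimeFT (τ := τ) (finite_support_projC (τ := τ) hf)).enorm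
  simp only [mul_assoc (projC τ (u _) _)]
  refine le_trans ?_ (mul_lconvolution_lconvolution_le_of_submultiplicative
    (measurable_sobolevWeight s) (sobolevWeight_add_le hs) (hmeas hu) (hmeas hv) (hmeas hw) x)
  refine mul_le_mul_right ((enorm_spaceTimeFT_projC_le _ x).trans ?_) _
  refine (enorm_spaceTimeFT_projC_mul_le hu hvw
    (fun n ↦ (continuous_projC _).mul (continuous_projC _)) x).trans ?_
  exact lconvolution_mono le_rfl
    (enorm_spaceTimeFT_projC_mul_le hv hpw fun n ↦ continuous_projC _) x

lemma lintegral_mul_lconvolution_lconvolution_le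
    {z f g h : ℤ × AddCircle (2 * Real.pi / τ) → ℝ≥0∞} (hz : Measurable z) (hf : Measurable f)
    (hg : Measurable g) (hh : Measurable h) (hz_cut : ∀ x, x.1 ∉ cutoffModes τ → z x = 0)
    (hf_cut : ∀ x, x.1 ∉ cutoffModes τ → f x = 0) (hg_cut : ∀ x, x.1 ∉ cutoffModes τ → g x = 0)
    (hh_cut : ∀ x, x.1 ∉ cutoffModes τ → h x = 0) :
    ∫⁻ x, z x * (f ⋆ₗ[phaseMeasure (2 * Real.pi / τ)] (g ⋆ₗ[phaseMeasure (2 * Real.pi / τ)] h)) x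
        ∂phaseMeasure (2 * Real.pi / τ)
      ≤ bilinearConst ^ 2 * (modulationNorm τ (3 / 8) f * modulationNorm τ (3 / 8) g
        * modulationNorm τ (3 / 8) h) * modulationNorm τ (3 / 8) z := by
  rw [lconvolution_comm]
  calc _ ≤ eLpNorm (g ⋆ₗ[phaseMeasure (2 * Real.pi / τ)] h) 2 (phaseMeasure (2 * Real.pi / τ))
        * eLpNorm (z ⋆ₗ[phaseMeasure (2 * Real.pi / τ)] f) 2 (phaseMeasure (2 * Real.pi / τ)) :=
        lintegral_mul_lconvolution_le hz (measurable_lconvolution _ hg hh) hf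
    _ ≤ bilinearConst * (modulationNorm τ (3 / 8) g * modulationNorm τ (3 / 8) h)
        * (bilinearConst * (modulationNorm τ (3 / 8) z * modulationNorm τ (3 / 8) f)) :=
        mul_le_mul' (eLpNorm_lconvolution_le_modulationNorm hg hh hg_cut hh_cut)
          (eLpNorm_lconvolution_le_modulationNorm hz hf hz_cut hf_cut)
    _ = _ := by ring

lemma modulationNorm_neg_le_of_le_lconvolution {c : ℝ≥0∞}
    {p f g h : ℤ × AddCircle (2 * Real.pi / τ) → ℝ≥0∞} (hp : Measurable p) (hf : Measurable f)
    (hg : Measurable g) (hh : Measurable h) (hp_cut : ∀ x, x.1 ∉ cutoffModes τ → p x = 0)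
    (hf_cut : ∀ x, x.1 ∉ cutoffModes τ → f x = 0) (hg_cut : ∀ x, x.1 ∉ cutoffModes τ → g x = 0)
    (hh_cut : ∀ x, x.1 ∉ cutoffModes τ → h x = 0) (hc : c ≠ ⊤)
    (hle : p ≤ fun x ↦ c * (f ⋆ₗ[phaseMeasure (2 * Real.pi / τ)]
      (g ⋆ₗ[phaseMeasure (2 * Real.pi / τ)] h)) x)
    (hfinite : modulationNorm τ (-(3 / 8)) p ≠ ⊤) :
    modulationNorm τ (-(3 / 8)) p
      ≤ c * bilinearConst ^ 2 * (modulationNorm τ (3 / 8) f * modulationNorm τ (3 / 8) g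
        * modulationNorm τ (3 / 8) h) := by
  -- Self-duality: with `q = ⟨d_τ⟩^{-3/8} p` and `z = ⟨d_τ⟩^{-3/8} q`, one has `∫ q² = ∫ z p` and
  -- `⟨d_τ⟩^{3/8} z = q`, so that the quadrilinear bound reads `‖q‖² ≤ C ‖q‖`.
  set q := fun x ↦ modulationWeight τ (-(3 / 8)) x * p x
  set z := fun x ↦ modulationWeight τ (-(3 / 8)) x * q x
  have hz : Measurable z :=
    (measurable_modulationWeight _).mul ((measurable_modulationWeight _).mul hp)
  have hz_cut (x) (hx : x.1 ∉ cutoffModes τ) : z x = 0 := by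
    simp only [z, q, hp_cut x hx, mul_zero]
  have hz_norm : modulationNorm τ (3 / 8) z = modulationNorm τ (-(3 / 8)) p := by
    simp only [modulationNorm, z, ← mul_assoc, modulationWeight_mul_neg, one_mul, q]
  have hquad := lintegral_mul_lconvolution_lconvolution_le hz hf hg hh hz_cut hf_cut hg_cut hh_cut
  rw [hz_norm] at hquad
  refine eLpNorm_two_le_of_lintegral_sq_le hfinite ?_
  calc ∫⁻ x, q x ^ 2 ∂phaseMeasure (2 * Real.pi / τ)
      ≤ ∫⁻ x, c * (z x * (f ⋆ₗ[phaseMeasure (2 * Real.pi / τ)]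
          (g ⋆ₗ[phaseMeasure (2 * Real.pi / τ)] h)) x) ∂phaseMeasure (2 * Real.pi / τ) := by
        refine lintegral_mono fun x ↦ ?_
        calc q x ^ 2 = z x * p x := by ring
          _ ≤ _ := mul_le_mul_right (hle x) _
          _ = _ := mul_left_comm _ _ _
    _ ≤ c * (bilinearConst ^ 2 * (modulationNorm τ (3 / 8) f * modulationNorm τ (3 / 8) g
          * modulationNorm τ (3 / 8) h) * modulationNorm τ (-(3 / 8)) p) := by
        rw [lintegral_const_mul' _ _ hc]
        gcongr
    _ = _ := by
        rw [← mul_assoc, ← mul_assoc]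
        rfl

theorem ofReal_XdNorm_projC_mul_mul_le (hs : 0 ≤ s) (hu : (Function.support u).Finite)
    (hv : (Function.support v).Finite) (hw : (Function.support w).Finite) :
    ENNReal.ofReal (XdNorm τ s (-(3 / 8))
        (fun n ↦ projC τ fun y ↦ projC τ (u n) y * projC τ (v n) y * projC τ (w n) y))
      ≤ ENNReal.ofReal (2 ^ s) ^ 2 * bilinearConst ^ 2
        * (modulationNorm τ (3 / 8) (cutoffProfile τ s u)
          * modulationNorm τ (3 / 8) (cutoffProfile τ s v)
          * modulationNorm τ (3 / 8) (cutoffProfile τ s w)) := by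
  have hfin : (Function.support fun n y ↦
      projC τ (u n) y * projC τ (v n) y * projC τ (w n) y).Finite :=
    (finite_support_projC hw).subset (Function.support_mul_subset_right _ _)
  have hnorm := ofReal_XdNorm_projC (τ := τ) (s := s) (-(3 / 8)) hfin
  rw [hnorm]
  exact modulationNorm_neg_le_of_le_lconvolution (measurable_cutoffProfile hfin)
    (measurable_cutoffProfile hu) (measurable_cutoffProfile hv) (measurable_cutoffProfile hw)
    (fun _ ↦ cutoffProfile_eq_zero) (fun _ ↦ cutoffProfile_eq_zero)
    (fun _ ↦ cutoffProfile_eq_zero) (fun _ ↦ cutoffProfile_eq_zero)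
    (ENNReal.pow_ne_top ENNReal.ofReal_ne_top) (cutoffProfile_mul_mul_le hs hu hv hw)
    (hnorm ▸ ENNReal.ofReal_ne_top)

end Trilinear

theorem discrete_trilinear_estimate_general (s₁ : ℝ) (hs₁ : 0 ≤ s₁) :
    ∃ C > (0 : ℝ), ∀ τ > (0 : ℝ), ∀ u v w : ℤ → Torus → ℂ,
      (∀ n, InHs s₁ (u n)) → (∀ n, InHs s₁ (v n)) → (∀ n, InHs s₁ (w n)) →
      {n : ℤ | u n ≠ 0}.Finite → {n : ℤ | v n ≠ 0}.Finite → {n : ℤ | w n ≠ 0}.Finite →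
      XdNorm τ s₁ (-(3 / 8))
          (fun n ↦ projC τ fun y ↦ projC τ (u n) y * projC τ (v n) y * projC τ (w n) y)
        ≤ C * XdNorm τ s₁ (3 / 8) u * XdNorm τ s₁ (3 / 8) v * XdNorm τ s₁ (3 / 8) w := by
  set K := ENNReal.ofReal (2 ^ s₁) ^ 2 * bilinearConst ^ 2
  have hK : K ≠ ⊤ := ENNReal.mul_ne_top (by finiteness) (ENNReal.pow_ne_top bilinearConst_ne_top)
  refine ⟨K.toReal + 1, by positivity, fun τ hτ u v w hu hv hw hu_fin hv_fin hw_fin ↦ ?_⟩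
  have : Fact (0 < τ) := ⟨hτ⟩
  have hu₀ : 0 ≤ XdNorm τ s₁ (3 / 8) u := XdNorm_nonneg
  have hv₀ : 0 ≤ XdNorm τ s₁ (3 / 8) v := XdNorm_nonneg
  have hw₀ : 0 ≤ XdNorm τ s₁ (3 / 8) w := XdNorm_nonneg
  have hle (f : ℤ → Torus → ℂ) (hf : ∀ n, InHs s₁ (f n)) (hf_fin : {n : ℤ | f n ≠ 0}.Finite) :=
    modulationNorm_cutoffProfile_le (τ := τ) (3 / 8) hf_fin fun m ↦ (hf m).2
  have htri := (ofReal_XdNorm_projC_mul_mul_le (τ := τ) hs₁ hu_fin hv_fin hw_fin).trans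
    (mul_le_mul_right (mul_le_mul' (mul_le_mul' (hle u hu hu_fin) (hle v hv hv_fin))
      (hle w hw hw_fin)) _)
  have hK_le : K ≤ ENNReal.ofReal (K.toReal + 1) :=
    ENNReal.le_ofReal_iff_toReal_le hK (by positivity) |>.2 (by linarith)
  have hfinal := htri.trans (mul_le_mul_left hK_le _)
  rwa [← ENNReal.ofReal_mul hu₀, ← ENNReal.ofReal_mul (by positivity),
    ← ENNReal.ofReal_mul (by positivity), ENNReal.ofReal_le_ofReal_iff (by positivity),
    ← mul_assoc, ← mul_assoc] at hfinal

/-- The trilinear estimate in discrete Bourgain spaces: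
`‖Π_τ(Π_τ u_n Π_τ v_n Π_τ w_n)‖_{X^{s₁,-3/8}_τ} ≲ Π ‖·‖_{X^{s₁,3/8}_τ}` for `s₁ ≥ 0`. -/
theorem discrete_trilinear_estimate (s₁ : ℝ) (hs₁ : 0 ≤ s₁) :
    ∃ C > (0 : ℝ), ∀ τ ∈ Set.Ioc (0 : ℝ) 1, ∀ u v w : ℤ → Torus → ℂ,
      (∀ n, InHs s₁ (u n)) → (∀ n, InHs s₁ (v n)) → (∀ n, InHs s₁ (w n)) →
      {n : ℤ | u n ≠ 0}.Finite → {n : ℤ | v n ≠ 0}.Finite → {n : ℤ | w n ≠ 0}.Finite →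
      XdNorm τ s₁ (-(3 / 8))
          (fun n => projC τ fun y => projC τ (u n) y * projC τ (v n) y * projC τ (w n) y)
        ≤ C * XdNorm τ s₁ (3 / 8) u * XdNorm τ s₁ (3 / 8) v * XdNorm τ s₁ (3 / 8) w := by
  obtain ⟨C, hC, hbound⟩ := discrete_trilinear_estimate_general s₁ hs₁
  exact ⟨C, hC, fun τ hτ ↦ hbound τ hτ.1⟩
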